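/- Let μ be a dominant integral weight of 𝔤. Then the dimension of the 𝔤-invariant subspace of adj(𝔤) ⊗ V_μ ⊗ V_{μ̄} (equivalently, of adj(𝔤) ⊗ V_μ ⊗ V_μ*) equals the number of indices j ∈ {1, …, r} such that ⟨μ, α_j∨⟩ > 0. -/

import Mathlib

open scoped TensorProduct Classical
open LieAlgebra LieModule Module

namespace AdjPaper

variable {L : Type} [LieRing L] [LieAlgebra ℂ L]

/-- `χ` is a root of `L` relative to the Cartan subalgebra `H`: a nonzero linear functional
on `H` with nontrivial root space. -/
def IsRoot (H : LieSubalgebra ℂ L) [H.IsCartanSubalgebra] (χ : Module.Dual ℂ H) : Prop :=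
  χ ≠ 0 ∧ rootSpace H ⇑χ ≠ ⊥

/-- `t` is the coroot `χ∨` of the root `χ`: it lies in `⁅𝔤_χ, 𝔤_{-χ}⁆` and satisfies
`χ t = 2`. -/
def IsCoroot (H : LieSubalgebra ℂ L) [H.IsCartanSubalgebra] (χ : Module.Dual ℂ H) (t : H) : Prop :=
  χ t = 2 ∧ ∃ e ∈ rootSpace H ⇑χ, ∃ f ∈ rootSpace H ⇑(-χ), (t : L) = ⁅e, f⁆

/-- `α` enumerates the simple roots of a base of the root system of `(L, H)`. -/
structure IsBase (H : LieSubalgebra ℂ L) [H.IsCartanSubalgebra] {r : ℕ} (α : Fin r → Module.Dual ℂ H) : Prop where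
  isRoot : ∀ j, IsRoot H (α j)
  indep : LinearIndependent ℂ α
  pos_neg : ∀ χ : Module.Dual ℂ H, IsRoot H χ →
    (∃ c : Fin r → ℕ, χ = ∑ j, (c j : ℂ) • α j) ∨ (∃ c : Fin r → ℕ, χ = -∑ j, (c j : ℂ) • α j)

/-- `χ` is a positive root relative to the base `α`. -/
def IsPosRoot (H : LieSubalgebra ℂ L) [H.IsCartanSubalgebra] {r : ℕ} (α : Fin r → Module.Dual ℂ H)
    (χ : Module.Dual ℂ H) : Prop :=
  IsRoot H χ ∧ ∃ c : Fin r → ℕ, χ = ∑ j, (c j : ℂ) • α j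

/-- A weight `μ` is dominant integral: all its pairings `⟨μ, α_j∨⟩ = μ (hc j)` with the
simple coroots `hc j` are non-negative integers. -/
def IsDomInt {H : LieSubalgebra ℂ L} {r : ℕ} (hc : Fin r → H) (μ : Module.Dual ℂ H) : Prop :=
  ∀ j, ∃ n : ℕ, μ (hc j) = (n : ℂ)

/-- `V` is an irreducible `L`-module with highest weight `μ` (relative to the Cartan
subalgebra `H` and the base `α`): it is irreducible and possesses a nonzero vector of
`H`-weight `μ` annihilated by all positive root spaces. -/
def IsHWIrrep (H : LieSubalgebra ℂ L) [H.IsCartanSubalgebra] {r : ℕ} (α : Fin r → Module.Dual ℂ H)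
    (μ : Module.Dual ℂ H) (V : Type) [AddCommGroup V] [Module ℂ V]
    [LieRingModule L V] [LieModule ℂ L V] : Prop :=
  IsSimpleOrder (LieSubmodule ℂ L V) ∧
  ∃ v : V, v ≠ 0 ∧ (∀ x : H, ⁅(x : L), v⁆ = μ x • v) ∧
    ∀ χ : Module.Dual ℂ H, IsPosRoot H α χ → ∀ e ∈ rootSpace H ⇑χ, ⁅e, v⁆ = 0

/-- `W` is isomorphic to the dual representation `V*`: there is a nondegenerate
`𝔤`-invariant pairing `W × V → ℂ`. -/
def IsDualPair (W V : Type) [AddCommGroup W] [Module ℂ W] [LieRingModule L W]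
    [AddCommGroup V] [Module ℂ V] [LieRingModule L V] : Prop :=
  ∃ B : W →ₗ[ℂ] V →ₗ[ℂ] ℂ,
    (∀ w, (∀ v, B w v = 0) → w = 0) ∧ (∀ v, (∀ w, B w v = 0) → v = 0) ∧
    ∀ (x : L) (w : W) (v : V), B ⁅x, w⁆ v + B w ⁅x, v⁆ = 0

/-- `V` is an orthogonal representation: it has a nondegenerate invariant symmetric
bilinear form. -/
def IsOrthogonalRep (V : Type) [AddCommGroup V] [Module ℂ V] [LieRingModule L V] : Prop :=
  ∃ B : V →ₗ[ℂ] V →ₗ[ℂ] ℂ,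
    (∀ v w, B v w = B w v) ∧ (∀ v, (∀ w, B v w = 0) → v = 0) ∧
    ∀ (x : L) (v w : V), B ⁅x, v⁆ w + B v ⁅x, w⁆ = 0

/-- `V` is a symplectic representation: it has a nondegenerate invariant alternating
bilinear form. -/
def IsSymplecticRep (V : Type) [AddCommGroup V] [Module ℂ V] [LieRingModule L V] : Prop :=
  ∃ B : V →ₗ[ℂ] V →ₗ[ℂ] ℂ,
    (∀ v, B v v = 0) ∧ (∀ v, (∀ w, B v w = 0) → v = 0) ∧
    ∀ (x : L) (v w : V), B ⁅x, v⁆ w + B v ⁅x, w⁆ = 0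

variable (L) in
/-- The operator on `adj(𝔤) ⊗ V ⊗ V` exchanging the two copies of `V`. -/
noncomputable def swapMap (V : Type) [AddCommGroup V] [Module ℂ V] :
    (L ⊗[ℂ] (V ⊗[ℂ] V)) →ₗ[ℂ] (L ⊗[ℂ] (V ⊗[ℂ] V)) :=
  LinearMap.lTensor L (TensorProduct.comm ℂ V V).toLinearMap

variable (L) in
/-- The `𝔤`-invariant subspace of `adj(𝔤) ⊗ S²V`, realised inside `adj(𝔤) ⊗ V ⊗ V` as the
invariant vectors fixed by the swap of the two copies of `V`. -/
noncomputable def symSquareInvariants (V : Type) [AddCommGroup V] [Module ℂ V]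
    [LieRingModule L V] [LieModule ℂ L V] : Submodule ℂ (L ⊗[ℂ] (V ⊗[ℂ] V)) :=
  (maxTrivSubmodule ℂ L (L ⊗[ℂ] (V ⊗[ℂ] V)) : Submodule ℂ (L ⊗[ℂ] (V ⊗[ℂ] V))) ⊓
    LinearMap.ker (swapMap L V - LinearMap.id)

variable (L) in
/-- The `𝔤`-invariant subspace of `adj(𝔤) ⊗ Λ²V`, realised inside `adj(𝔤) ⊗ V ⊗ V` as the
invariant vectors anti-fixed by the swap of the two copies of `V`. -/
noncomputable def altSquareInvariants (V : Type) [AddCommGroup V] [Module ℂ V]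
    [LieRingModule L V] [LieModule ℂ L V] : Submodule ℂ (L ⊗[ℂ] (V ⊗[ℂ] V)) :=
  (maxTrivSubmodule ℂ L (L ⊗[ℂ] (V ⊗[ℂ] V)) : Submodule ℂ (L ⊗[ℂ] (V ⊗[ℂ] V))) ⊓
    LinearMap.ker (swapMap L V + LinearMap.id)

end AdjPaper

/-!
Invariants of `𝔤 ⊗ V ⊗ V*` are equivariant maps `Θ : V* → Hom(V, 𝔤)`. Let `v ∈ V` be a highest
weight vector and `w ∈ V*` the dual lowest weight vector. Then `Θ` is determined by `Θ w v`, which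
has weight zero and so lies in `𝔥`, and `α_j (Θ w v) = 0` whenever `⟨μ, α_j∨⟩ = 0`, because then the
root vector `f_j` kills `v`.

Conversely every `h ∈ 𝔥` subject to these conditions occurs. The module `V` is the quotient of the
Verma module `M(μ)` by the submodule generated by the vectors `f_j ^ (m_j + 1) v`, where
`m_j = ⟨μ, α_j∨⟩`: that quotient is integrable, and the Casimir operator shows that an integrable
highest weight module is irreducible. As `f_j ^ (m_j + 1)` kills `h`, there is an `𝔫⁻`-equivariant
map `V → 𝔤` with `v ↦ h`. It is a lowest weight vector of weight `-μ` in `Hom(V, 𝔤)`, hence, by the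
same presentation of `V*`, the image of `w` under an equivariant map.
-/

namespace AdjPaper

section InducedModule

variable {K L : Type*} [CommRing K] [LieRing L] [LieAlgebra K L]

attribute [local instance] LieRing.ofAssociativeRing

open UniversalEnvelopingAlgebra

lemma universalEnvelopingAlgebra_left_induction (S : Submodule K (UniversalEnvelopingAlgebra K L))
    (one_mem : 1 ∈ S) (ι_mul_mem : ∀ x, ∀ a ∈ S, ι K x * a ∈ S)
    (a : UniversalEnvelopingAlgebra K L) : a ∈ S := by
  suffices h : ∀ b ∈ S, a * b ∈ S by simpa using h 1 one_mem
  obtain ⟨t, rfl⟩ : ∃ t, mkAlgHom K L t = a := RingCon.mkₐ_surjective _ a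
  induction t using TensorAlgebra.induction with
  | algebraMap r =>
    intro b hb
    rw [AlgHom.commutes, ← Algebra.smul_def]
    exact S.smul_mem r hb
  | ι x => exact ι_mul_mem x
  | mul s t hs ht =>
    intro b hb
    rw [map_mul, mul_assoc]
    exact hs _ (ht _ hb)
  | add s t hs ht =>
    intro b hb
    rw [map_add, add_mul]
    exact S.add_mem (hs _ hb) (ht _ hb)

/-- The left regular representation of a Lie algebra on its universal enveloping algebra. -/
abbrev leftRegularLieRingModule : LieRingModule L (UniversalEnvelopingAlgebra K L) where
  bracket x a := ι K x * a
  add_lie x y a := by rw [map_add, add_mul]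
  lie_add x a b := mul_add _ a b
  leibniz_lie x y a := by
    rw [LieHom.map_lie, LieRing.of_associative_ring_bracket]
    noncomm_ring

attribute [local instance] leftRegularLieRingModule

lemma leftRegular_lie_apply (x : L) (a : UniversalEnvelopingAlgebra K L) : ⁅x, a⁆ = ι K x * a := rfl

lemma leftRegularLieModule : LieModule K L (UniversalEnvelopingAlgebra K L) where
  smul_lie c x a := by simp only [leftRegular_lie_apply, map_smul, smul_mul_assoc]
  lie_smul c x a := by simp only [leftRegular_lie_apply, mul_smul_comm]

attribute [local instance] leftRegularLieModule

variable {A B : LieSubalgebra K L} (hAB : IsCompl A.toSubmodule B.toSubmodule)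
  (ν : LieCharacter K B)

/-- The map `x ↦ x · 1` for the induced action of `L = A ⊕ B` on `U(A)`: elements of `A` act by
multiplication and those of `B` through the character `ν`. -/
noncomputable def inducedActionOne : L →ₗ[K] UniversalEnvelopingAlgebra K A :=
  LinearMap.ofIsCompl hAB (ι K (L := A)).toLinearMap
    (Algebra.linearMap K (UniversalEnvelopingAlgebra K A) ∘ₗ ν.toLinearMap)

/-- The action of `L = A ⊕ B` on `U(A)` inducing the character `ν` of `B`. The requirement
`x · (f a) = f (x · a) + ⁅x, f⁆ · a` for `f` in `A` says that `a ↦ (x ↦ x · a)` is a morphism of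
`A`-modules from `U(A)` to `L →ₗ[K] U(A)`, so that it is determined by `inducedActionOne`. -/
noncomputable def inducedAction : L →ₗ[K] Module.End K (UniversalEnvelopingAlgebra K A) :=
  ((lift K (toEnd K A (L →ₗ[K] UniversalEnvelopingAlgebra K A))).toLinearMap.flip
    (inducedActionOne hAB ν)).flip

lemma inducedAction_one (x : L) : inducedAction hAB ν x 1 = inducedActionOne hAB ν x := by
  simp [inducedAction]

lemma inducedActionOne_left (f : A) : inducedActionOne hAB ν f = ι K f :=
  LinearMap.ofIsCompl_apply_left hAB f

lemma inducedActionOne_right (b : B) : inducedActionOne hAB ν b = algebraMap K _ (ν b) :=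
  LinearMap.ofIsCompl_apply_right hAB b

lemma inducedAction_ι_mul (x : L) (f : A) (a : UniversalEnvelopingAlgebra K A) :
    inducedAction hAB ν x (ι K f * a) =
      ι K f * inducedAction hAB ν x a + inducedAction hAB ν ⁅x, (f : L)⁆ a := by
  rw [← lie_skew, map_neg, LinearMap.neg_apply, ← sub_eq_add_neg]
  simp only [inducedAction, LinearMap.flip_apply, AlgHom.toLinearMap_apply, map_mul, lift_ι_apply,
    Module.End.mul_apply]
  rfl

lemma inducedAction_left (f : A) (a : UniversalEnvelopingAlgebra K A) :
    inducedAction hAB ν f a = ι K f * a := by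
  suffices h : a ∈ ⨅ f : A, LinearMap.eqLocus (inducedAction hAB ν f) (LinearMap.mulLeft K (ι K f))
    from (Submodule.mem_iInf _).1 h f
  refine universalEnvelopingAlgebra_left_induction _ ?_ (fun g b hb => ?_) a
  · simp [Submodule.mem_iInf, inducedAction_one, inducedActionOne_left]
  · simp only [Submodule.mem_iInf, LinearMap.mem_eqLocus, LinearMap.mulLeft_apply] at hb ⊢
    intro f
    rw [inducedAction_ι_mul, ← LieSubalgebra.coe_bracket, hb, hb, LieHom.map_lie,
      LieRing.of_associative_ring_bracket]
    noncomm_ring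

lemma inducedAction_lie_left (f : A) (y : L) (a : UniversalEnvelopingAlgebra K A) :
    inducedAction hAB ν ⁅(f : L), y⁆ a = inducedAction hAB ν f (inducedAction hAB ν y a) -
      inducedAction hAB ν y (inducedAction hAB ν f a) := by
  rw [inducedAction_left, inducedAction_left, inducedAction_ι_mul, ← lie_skew, map_neg,
    LinearMap.neg_apply]
  abel

lemma inducedAction_lie_right_one (b c : B) :
    inducedAction hAB ν ⁅(b : L), (c : L)⁆ 1 = inducedAction hAB ν b (inducedAction hAB ν c 1) -
      inducedAction hAB ν c (inducedAction hAB ν b 1) := by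
  rw [← LieSubalgebra.coe_bracket]
  simp only [inducedAction_one, inducedActionOne_right, lieCharacter_apply_lie, map_zero,
    Algebra.algebraMap_eq_smul_one, map_smul]
  rw [smul_comm, sub_self]

lemma inducedAction_lie_one (x y : L) :
    inducedAction hAB ν ⁅x, y⁆ 1 = inducedAction hAB ν x (inducedAction hAB ν y 1) -
      inducedAction hAB ν y (inducedAction hAB ν x 1) := by
  have decompose (z : L) : ∃ f : A, ∃ b : B, (f : L) + b = z := by
    obtain ⟨f, hf, b, hb, rfl⟩ := Submodule.mem_sup.1 (hAB.sup_eq_top ▸ Submodule.mem_top (x := z))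
    exact ⟨⟨f, hf⟩, ⟨b, hb⟩, rfl⟩
  obtain ⟨f, b, rfl⟩ := decompose x
  obtain ⟨g, c, rfl⟩ := decompose y
  have hbg : inducedAction hAB ν ⁅(b : L), (g : L)⁆ 1 =
      inducedAction hAB ν b (inducedAction hAB ν g 1) -
        inducedAction hAB ν g (inducedAction hAB ν b 1) := by
    rw [← lie_skew, map_neg, LinearMap.neg_apply, inducedAction_lie_left, neg_sub]
  simp only [add_lie, lie_add, map_add, LinearMap.add_apply, inducedAction_lie_left, hbg,
    inducedAction_lie_right_one]
  abel

lemma inducedAction_lie (x y : L) (a : UniversalEnvelopingAlgebra K A) :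
    inducedAction hAB ν ⁅x, y⁆ a = inducedAction hAB ν x (inducedAction hAB ν y a) -
      inducedAction hAB ν y (inducedAction hAB ν x a) := by
  let ρ := inducedAction hAB ν
  suffices h : a ∈ ⨅ x : L, ⨅ y : L, LinearMap.eqLocus (ρ ⁅x, y⁆) (ρ x * ρ y - ρ y * ρ x) from
    (Submodule.mem_iInf _).1 ((Submodule.mem_iInf _).1 h x) y
  refine universalEnvelopingAlgebra_left_induction _ ?_ (fun f b hb => ?_) a
  · simpa only [Submodule.mem_iInf] using! inducedAction_lie_one hAB ν
  · simp only [Submodule.mem_iInf, LinearMap.mem_eqLocus, LinearMap.sub_apply,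
      Module.End.mul_apply] at hb ⊢
    intro x y
    have jacobi : ⁅⁅x, y⁆, (f : L)⁆ = ⁅⁅x, (f : L)⁆, y⁆ + ⁅x, ⁅y, (f : L)⁆⁆ := by
      rw [leibniz_lie x y, ← lie_skew y]
      abel
    simp only [ρ, inducedAction_ι_mul, map_add] at hb ⊢
    rw [jacobi, map_add, LinearMap.add_apply, hb x y, hb _ y, hb x ⁅y, (f : L)⁆, mul_sub]
    abel

/-- The module induced from a character `ν` of `B` to `L = A ⊕ B`, realised on `U(A)`. -/
def InducedModule (_ : IsCompl A.toSubmodule B.toSubmodule) (_ : LieCharacter K B) : Type _ :=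
  UniversalEnvelopingAlgebra K A

namespace InducedModule

noncomputable instance : AddCommGroup (InducedModule hAB ν) :=
  inferInstanceAs (AddCommGroup (UniversalEnvelopingAlgebra K A))

noncomputable instance : Module K (InducedModule hAB ν) :=
  inferInstanceAs (Module K (UniversalEnvelopingAlgebra K A))

noncomputable instance : LieRingModule L (InducedModule hAB ν) where
  bracket x a := inducedAction hAB ν x a
  add_lie x y a := by
    change inducedAction hAB ν (x + y) a = _
    rw [map_add]
    rfl
  lie_add x a b := map_add (inducedAction hAB ν x) a b
  leibniz_lie x y a := (eq_sub_iff_add_eq.1 (inducedAction_lie hAB ν x y a)).symm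

instance : LieModule K L (InducedModule hAB ν) where
  smul_lie c x a := by
    change inducedAction hAB ν (c • x) a = _
    rw [map_smul]
    rfl
  lie_smul c x a := map_smul (inducedAction hAB ν x) c a

/-- The canonical generator `1 ∈ U(A)` of an induced module. -/
noncomputable def generator : InducedModule hAB ν := (1 : UniversalEnvelopingAlgebra K A)

lemma lie_generator (b : B) : ⁅(b : L), generator hAB ν⁆ = ν b • generator hAB ν :=
  (inducedAction_one hAB ν b).trans <| by
    rw [inducedActionOne_right, Algebra.algebraMap_eq_smul_one]
    rfl

lemma eq_top_of_generator_mem (P : Submodule K (InducedModule hAB ν))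
    (generator_mem : generator hAB ν ∈ P)
    (lie_mem : ∀ f ∈ A, ∀ m ∈ P, ⁅f, m⁆ ∈ P) : P = ⊤ := by
  refine Submodule.eq_top_iff'.2 (universalEnvelopingAlgebra_left_induction P generator_mem ?_)
  intro f a ha
  rw [← inducedAction_left hAB ν]
  exact lie_mem f f.2 a ha

lemma exists_linearMap_generator_eq {Z : Type*} [AddCommGroup Z] [Module K Z] [LieRingModule L Z]
    [LieModule K L Z] (z : Z) : ∃ ψ : InducedModule hAB ν →ₗ[K] Z,
      ψ (generator hAB ν) = z ∧ ∀ f ∈ A, ∀ m, ψ ⁅f, m⁆ = ⁅f, ψ m⁆ := by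
  let φ : UniversalEnvelopingAlgebra K A →ₐ[K] Module.End K Z :=
    lift K ((toEnd K L Z).comp A.incl)
  refine ⟨φ.toLinearMap.flip z, ?_, fun f hf m => ?_⟩
  · change φ 1 z = z
    rw [map_one, Module.End.one_apply]
  · change φ (inducedAction hAB ν f m) z = ⁅f, φ m z⁆
    refine (LinearMap.congr_fun (congrArg φ (inducedAction_left hAB ν ⟨f, hf⟩ m)) z).trans
      ((LinearMap.congr_fun (map_mul φ _ _) z).trans ?_)
    rw [lift_ι_apply]
    rfl

end InducedModule

end InducedModule

section WeightVectors

variable {k H M : Type*} [Field k] [LieRing H] [LieAlgebra k H]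
  [AddCommGroup M] [Module k M] [LieRingModule H M] [LieModule k H M]

lemma eq_of_mem_weightSpace {χ ψ : H → k} {m : M} (hχ : m ∈ weightSpace M χ)
    (hψ : m ∈ weightSpace M ψ) (hm : m ≠ 0) : χ = ψ := by
  ext h
  refine smul_left_injective k hm ?_
  change χ h • m = ψ h • m
  rw [← (mem_weightSpace χ m).1 hχ h, (mem_weightSpace ψ m).1 hψ h]

lemma exists_mem_weightSpace_of_mem_biSup {ι : Type*} (χ : ι → H → k) (N : LieSubmodule k H M)
    (s : Finset ι) {m : M} (hm : m ∈ N) (hms : m ∈ ⨆ i ∈ s, weightSpace M (χ i)) (hm0 : m ≠ 0) :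
    ∃ i, ∃ n ∈ N, n ≠ 0 ∧ n ∈ weightSpace M (χ i) := by
  induction s using Finset.induction_on generalizing m with
  | empty =>
    refine absurd ?_ hm0
    simpa using hms
  | insert i s _ ih =>
    by_cases hmi : m ∈ weightSpace M (χ i)
    · exact ⟨i, m, hm, hm0, hmi⟩
    obtain ⟨h, hh⟩ := not_forall.1 (mt (mem_weightSpace (χ i) m).2 hmi)
    rw [Finset.iSup_insert, LieSubmodule.mem_sup] at hms
    obtain ⟨a, ha, b, hb, rfl⟩ := hms
    -- `h - χ i h` kills the component of weight `χ i`
    have hab : ⁅h, a + b⁆ - χ i h • (a + b) = ⁅h, b⁆ - χ i h • b := by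
      rw [lie_add, (mem_weightSpace (χ i) a).1 ha, smul_add]
      abel
    refine ih (m := ⁅h, a + b⁆ - χ i h • (a + b)) (sub_mem (N.lie_mem hm) (N.smul_mem _ hm)) ?_
      (sub_ne_zero.2 hh)
    rw [hab]
    exact sub_mem (LieSubmodule.lie_mem _ hb) ((⨆ i ∈ s, weightSpace M (χ i)).smul_mem _ hb)

lemma exists_mem_weightSpace_of_mem_iSup {ι : Type*} (χ : ι → H → k) (N : LieSubmodule k H M)
    {m : M} (hm : m ∈ N) (hmχ : m ∈ ⨆ i, weightSpace M (χ i)) (hm0 : m ≠ 0) :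
    ∃ i, ∃ n ∈ N, n ≠ 0 ∧ n ∈ weightSpace M (χ i) := by
  rw [← LieSubmodule.mem_toSubmodule, LieSubmodule.iSup_toSubmodule,
    Submodule.mem_iSup_iff_exists_finset] at hmχ
  obtain ⟨s, hs⟩ := hmχ
  refine exists_mem_weightSpace_of_mem_biSup χ N s hm ?_ hm0
  simpa only [← LieSubmodule.mem_toSubmodule, LieSubmodule.iSup_toSubmodule] using hs

end WeightVectors

section Generation

variable {R L X : Type*} [CommRing R] [LieRing L] [LieAlgebra R L] [AddCommGroup X] [Module R X]
  [LieRingModule L X] [LieModule R L X]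

/-- If `A` spans enough of the action on `v`, then `v` already generates under `A` alone: the
vectors of the `A`-span `Q` of `v` which `L` maps into `Q` form an `A`-stable subspace. -/
lemma lieSpan_singleton_le_of_stable (A : Set L) (v : X)
    (lie_generator_mem : ∀ P : Submodule R X, v ∈ P → (∀ a ∈ A, ∀ x ∈ P, ⁅a, x⁆ ∈ P) →
      ∀ y : L, ⁅y, v⁆ ∈ P)
    (P : Submodule R X) (hvP : v ∈ P) (hP : ∀ a ∈ A, ∀ x ∈ P, ⁅a, x⁆ ∈ P) :
    (LieSubmodule.lieSpan R L {v}).toSubmodule ≤ P := by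
  let F : Set (Submodule R X) := {Q | v ∈ Q ∧ ∀ a ∈ A, ∀ x ∈ Q, ⁅a, x⁆ ∈ Q}
  have hvF : v ∈ sInf F := (Submodule.mem_sInf).2 fun Q hQ => hQ.1
  have hF : ∀ a ∈ A, ∀ x ∈ sInf F, ⁅a, x⁆ ∈ sInf F := fun a ha x hx =>
    (Submodule.mem_sInf).2 fun Q hQ => hQ.2 a ha x ((Submodule.mem_sInf).1 hx Q hQ)
  let S : Submodule R X := sInf F ⊓ ⨅ y : L, (sInf F).comap (toEnd R L X y)
  have mem_S {x : X} : x ∈ S ↔ x ∈ sInf F ∧ ∀ y : L, ⁅y, x⁆ ∈ sInf F := by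
    simp [S, Submodule.mem_iInf]
  have hS : sInf F ≤ S := by
    refine sInf_le ⟨mem_S.2 ⟨hvF, lie_generator_mem _ hvF hF⟩, fun a ha x hx => ?_⟩
    obtain ⟨hx, hLx⟩ := mem_S.1 hx
    refine mem_S.2 ⟨hF a ha x hx, fun y => ?_⟩
    rw [leibniz_lie]
    exact add_mem (hLx _) (hF a ha _ (hLx y))
  let N : LieSubmodule R L X := { sInf F with lie_mem := fun {y x} hx => (mem_S.1 (hS hx)).2 y }
  have hN : LieSubmodule.lieSpan R L {v} ≤ N :=
    LieSubmodule.lieSpan_le.2 (Set.singleton_subset_iff.2 hvF)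
  exact fun x hx => (sInf_le (a := P) ⟨hvP, hP⟩ : sInf F ≤ P) (hN hx)

end Generation

section Roots

variable {L : Type} [LieRing L] [LieAlgebra ℂ L] {H : LieSubalgebra ℂ L} {r : ℕ}
  {α : Fin r → Module.Dual ℂ H}

/-- The weight `∑ j, c j • α j` of the root lattice. -/
noncomputable def rootCombination (α : Fin r → Module.Dual ℂ H) :
    (Fin r → ℕ) →+ Module.Dual ℂ H where
  toFun c := ∑ j, (c j : ℂ) • α j
  map_zero' := by simp
  map_add' c d := by simp [add_smul, Finset.sum_add_distrib]

lemma rootCombination_apply (c : Fin r → ℕ) : rootCombination α c = ∑ j, (c j : ℂ) • α j := rfl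

lemma rootCombination_single (j : Fin r) (n : ℕ) :
    rootCombination α (Pi.single j n) = (n : ℂ) • α j := by
  rw [rootCombination_apply, Finset.sum_eq_single j (fun i _ hi => by simp [hi]) (by simp)]
  simp

lemma rootCombination_injective (hα : LinearIndependent ℂ α) :
    Function.Injective (rootCombination α) := by
  intro c d h
  have hcd : ∑ j, ((c j : ℂ) - (d j : ℂ)) • α j = 0 := by
    simp only [sub_smul, Finset.sum_sub_distrib]
    exact sub_eq_zero.2 h
  ext j
  exact_mod_cast sub_eq_zero.1 (Fintype.linearIndependent_iff.1 hα _ hcd j)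

lemma eq_zero_of_rootCombination_add_eq_zero (hα : LinearIndependent ℂ α) {c d : Fin r → ℕ}
    (h : rootCombination α c + rootCombination α d = 0) : c = 0 := by
  rw [← map_add, ← map_zero (rootCombination α)] at h
  exact (add_eq_zero.1 (rootCombination_injective hα h)).1

variable [H.IsCartanSubalgebra]

lemma IsPosRoot.exists_rootCombination {χ : Module.Dual ℂ H} (hχ : IsPosRoot H α χ) :
    ∃ c, c ≠ 0 ∧ χ = rootCombination α c := by
  obtain ⟨hχ, c, hc⟩ := hχ
  refine ⟨c, ?_, hc⟩
  rintro rfl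
  exact hχ.1 (hc.trans (map_zero (rootCombination α)))

lemma IsBase.isPosRoot (hα : IsBase H α) (j : Fin r) : IsPosRoot H α (α j) :=
  ⟨hα.isRoot j, Pi.single j 1, by
    rw [← rootCombination_apply, rootCombination_single, Nat.cast_one, one_smul]⟩

lemma IsCoroot.neg {χ : Module.Dual ℂ H} {t : H} (h : IsCoroot H χ t) : IsCoroot H (-χ) (-t) := by
  obtain ⟨hχt, e, he, f, hf, htef⟩ := h
  refine ⟨by simpa using hχt, f, hf, e, by rwa [neg_neg], ?_⟩
  rw [← lie_skew, ← htef]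
  simp

/-- A root, as a weight of the adjoint representation. -/
def IsRoot.toWeight {χ : Module.Dual ℂ H} (hχ : IsRoot H χ) : Weight ℂ H L := ⟨χ, hχ.2⟩

lemma IsRoot.isNonZero_toWeight {χ : Module.Dual ℂ H} (hχ : IsRoot H χ) :
    hχ.toWeight.IsNonZero :=
  fun h => hχ.1 (DFunLike.coe_injective h)

variable [FiniteDimensional ℂ L] [LieAlgebra.IsKilling ℂ L]

lemma IsRoot.neg {χ : Module.Dual ℂ H} (hχ : IsRoot H χ) : IsRoot H (-χ) :=
  ⟨neg_ne_zero.2 hχ.1, (-hχ.toWeight).2⟩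

lemma IsBase.isPosRoot_or_isPosRoot_neg (hα : IsBase H α) {χ : Module.Dual ℂ H}
    (hχ : IsRoot H χ) : IsPosRoot H α χ ∨ IsPosRoot H α (-χ) := by
  rcases hα.pos_neg χ hχ with ⟨c, hc⟩ | ⟨c, hc⟩
  · exact .inl ⟨hχ, c, hc⟩
  · exact .inr ⟨hχ.neg, c, by rw [hc, neg_neg]⟩

lemma isPosRoot_neg {χ : Module.Dual ℂ H} : IsPosRoot H (-α) χ ↔ IsPosRoot H α (-χ) := by
  constructor
  · rintro ⟨h, c, hc⟩
    exact ⟨h.neg, c, by simp [hc]⟩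
  · rintro ⟨h, c, hc⟩
    refine ⟨neg_neg χ ▸ h.neg, c, ?_⟩
    rw [← neg_neg χ, hc]
    simp

lemma IsBase.neg (hα : IsBase H α) : IsBase H (-α) where
  isRoot j := (hα.isRoot j).neg
  indep := by
    convert hα.indep.units_smul (fun _ => (-1 : ℂˣ)) using 1
    ext j
    simp
  pos_neg χ hχ := by
    rcases hα.pos_neg χ hχ with ⟨c, hc⟩ | ⟨c, hc⟩
    · exact .inr ⟨c, by simp [hc]⟩
    · exact .inl ⟨c, by simp [hc]⟩

lemma mem_rootSpace_iff {χ : Module.Dual ℂ H} {x : L} :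
    x ∈ rootSpace H χ ↔ ∀ h : H, ⁅(h : L), x⁆ = χ h • x :=
  ⟨fun hx h => LieAlgebra.IsKilling.lie_eq_smul_of_mem_rootSpace hx h,
    fun hx => weightSpace_le_genWeightSpace L χ ((mem_weightSpace _ _).2 hx)⟩

lemma IsBase.eq_top_of_rootSpace_le (hα : IsBase H α) {S : Submodule ℂ L} (hH : H.toSubmodule ≤ S)
    (hpos : ∀ χ, IsPosRoot H α χ → ∀ e ∈ rootSpace H χ, e ∈ S)
    (hneg : ∀ χ, IsPosRoot H α χ → ∀ f ∈ rootSpace H ⇑(-χ), f ∈ S) : S = ⊤ := by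
  rw [eq_top_iff, ← LieSubmodule.top_toSubmodule (R := ℂ) (L := H),
    ← iSup_genWeightSpace_eq_top' ℂ H L, LieSubmodule.iSup_toSubmodule]
  refine iSup_le fun χ x (hx : x ∈ rootSpace H (Weight.toLinear ℂ H L χ)) => ?_
  by_cases hχ : Weight.toLinear ℂ H L χ = 0
  · rw [hχ] at hx
    change x ∈ rootSpace H (0 : H → ℂ) at hx
    rw [rootSpace_zero_eq] at hx
    exact hH hx
  · rcases hα.isPosRoot_or_isPosRoot_neg ⟨hχ, χ.2⟩ with h | h
    · exact hpos _ h x hx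
    · exact hneg _ h x (by rwa [neg_neg])

section Module

variable {X : Type*} [AddCommGroup X] [Module ℂ X] [LieRingModule L X] [LieModule ℂ L X]

lemma lie_mem_weightSpace {χ ν : Module.Dual ℂ H} {e : L} {x : X} (he : e ∈ rootSpace H χ)
    (hx : x ∈ weightSpace X ν) : ⁅e, x⁆ ∈ weightSpace X ⇑(χ + ν) := by
  refine (mem_weightSpace _ _).2 fun h => ?_
  have hhe : ⁅(h : L), e⁆ = χ h • e := mem_rootSpace_iff.1 he h
  have hhx : ⁅(h : L), x⁆ = ν h • x := (mem_weightSpace _ _).1 hx h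
  rw [LieSubalgebra.coe_bracket_of_module, leibniz_lie, hhe, hhx, smul_lie, lie_smul,
    LinearMap.add_apply, add_smul]

end Module

end Roots

section HighestWeight

variable {L : Type} [LieRing L] [LieAlgebra ℂ L] {H : LieSubalgebra ℂ L}
  {r : ℕ} {α : Fin r → Module.Dual ℂ H} {μ : Module.Dual ℂ H}
  {X : Type*} [AddCommGroup X] [Module ℂ X] [LieRingModule L X] [LieModule ℂ L X] {v : X}

/-- The sum of the weight spaces of weights `μ - c₁ α₁ - ⋯ - c_r α_r`. -/
noncomputable def lowerSpace (α : Fin r → Module.Dual ℂ H) (μ : Module.Dual ℂ H) (X : Type*)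
    [AddCommGroup X] [Module ℂ X] [LieRingModule L X] [LieModule ℂ L X] : LieSubmodule ℂ H X :=
  ⨆ c : Fin r → ℕ, weightSpace X ⇑(μ - rootCombination α c)

/-- The sum of the weight spaces of weights `μ - c₁ α₁ - ⋯ - c_r α_r` other than `μ`. -/
noncomputable def strictlyLowerSpace (α : Fin r → Module.Dual ℂ H) (μ : Module.Dual ℂ H)
    (X : Type*) [AddCommGroup X] [Module ℂ X] [LieRingModule L X] [LieModule ℂ L X] :
    LieSubmodule ℂ H X :=
  ⨆ c : {c : Fin r → ℕ // c ≠ 0}, weightSpace X ⇑(μ - rootCombination α c)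

lemma mem_lowerSpace_of_mem_weightSpace {x : X} (hx : x ∈ weightSpace X μ) :
    x ∈ lowerSpace α μ X := by
  refine LieSubmodule.mem_iSup_of_mem 0 ?_
  rwa [map_zero, sub_zero]

lemma strictlyLowerSpace_le_lowerSpace : strictlyLowerSpace α μ X ≤ lowerSpace α μ X :=
  iSup_le fun c => le_iSup (fun c => weightSpace X ⇑(μ - rootCombination α c)) c.1

lemma eq_zero_of_mem_strictlyLowerSpace (hα : LinearIndependent ℂ α) {x : X}
    (hx : x ∈ weightSpace X μ) (hx' : x ∈ strictlyLowerSpace α μ X) : x = 0 := by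
  by_contra hx0
  obtain ⟨⟨c, hc⟩, y, hyμ, hy0, hyc⟩ := exists_mem_weightSpace_of_mem_iSup
    (fun c : {c : Fin r → ℕ // c ≠ 0} => ⇑(μ - rootCombination α c)) (weightSpace X μ) hx hx' hx0
  have hμ : μ = μ - rootCombination α c :=
    DFunLike.coe_injective (eq_of_mem_weightSpace hyμ hyc hy0)
  refine hc (rootCombination_injective hα ?_)
  rw [map_zero]
  exact sub_eq_self.1 hμ.symm

variable [H.IsCartanSubalgebra]

/-- A singular vector of weight `μ`: a weight vector, possibly zero, annihilated by all positive
root spaces. -/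
structure IsSingularVector (α : Fin r → Module.Dual ℂ H) (μ : Module.Dual ℂ H) (v : X) : Prop where
  mem_weightSpace : v ∈ weightSpace X μ
  lie_eq_zero : ∀ χ, IsPosRoot H α χ → ∀ e ∈ rootSpace H χ, ⁅e, v⁆ = 0

/-- `X` is a highest weight module generated by the singular vector `v` of weight `μ`. -/
structure IsHighestWeightGenerator (α : Fin r → Module.Dual ℂ H) (μ : Module.Dual ℂ H) (v : X) :
    Prop extends IsSingularVector α μ v where
  lieSpan_eq_top : LieSubmodule.lieSpan ℂ L {v} = ⊤

lemma IsSingularVector.lie_eq_smul (hv : IsSingularVector α μ v) (h : H) :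
    ⁅(h : L), v⁆ = μ h • v :=
  (LieModule.mem_weightSpace _ _).1 hv.mem_weightSpace h

lemma IsSingularVector.isHighestWeightGenerator [LieModule.IsIrreducible ℂ L X]
    (hv : IsSingularVector α μ v) (hv0 : v ≠ 0) : IsHighestWeightGenerator α μ v where
  toIsSingularVector := hv
  lieSpan_eq_top := (eq_bot_or_eq_top _).resolve_left fun h =>
    hv0 ((LieSubmodule.lieSpan_eq_bot_iff ℂ L X).1 h v (Set.mem_singleton v))

variable [FiniteDimensional ℂ L] [LieAlgebra.IsKilling ℂ L]

lemma lie_mem_strictlyLowerSpace {χ : Module.Dual ℂ H} (hχ : IsPosRoot H α χ) {f : L}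
    (hf : f ∈ rootSpace H ⇑(-χ)) {x : X} (hx : x ∈ lowerSpace α μ X) :
    ⁅f, x⁆ ∈ strictlyLowerSpace α μ X := by
  obtain ⟨d, hd, rfl⟩ := hχ.exists_rootCombination
  suffices hle : (lowerSpace α μ X).toSubmodule ≤
      (strictlyLowerSpace α μ X).toSubmodule.comap (toEnd ℂ L X f) from hle hx
  rw [lowerSpace, LieSubmodule.iSup_toSubmodule]
  refine iSup_le fun c y hy => LieSubmodule.mem_iSup_of_mem ⟨c + d, by simp [hd]⟩ ?_
  have hweight : μ - rootCombination α (c + d) =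
      -rootCombination α d + (μ - rootCombination α c) := by
    rw [map_add]
    abel
  rw [hweight]
  exact lie_mem_weightSpace hf hy

namespace IsHighestWeightGenerator

/-- The module is generated by `v` under the negative root spaces alone. -/
lemma eq_top_of_stable (hα : IsBase H α) (hv : IsHighestWeightGenerator α μ v)
    {P : Submodule ℂ X} (hvP : v ∈ P)
    (hP : ∀ χ, IsPosRoot H α χ → ∀ f ∈ rootSpace H ⇑(-χ), ∀ x ∈ P, ⁅f, x⁆ ∈ P) : P = ⊤ := by
  have hle := lieSpan_singleton_le_of_stable {f : L | ∃ χ, IsPosRoot H α χ ∧ f ∈ rootSpace H ⇑(-χ)}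
    v (fun Q hvQ hQ y => ?_) P hvP fun f ⟨χ, hχ, hf⟩ => hP χ hχ f hf
  · rwa [hv.lieSpan_eq_top, LieSubmodule.top_toSubmodule, top_le_iff] at hle
  · have htop : Q.comap ((toEnd ℂ L X : L →ₗ[ℂ] Module.End ℂ X).flip v) = ⊤ := by
      refine hα.eq_top_of_rootSpace_le (fun h hh => ?_) (fun χ hχ e he => ?_) fun χ hχ f hf => ?_
      · change ⁅((⟨h, hh⟩ : H) : L), v⁆ ∈ Q
        rw [hv.lie_eq_smul]
        exact Q.smul_mem _ hvQ
      · change ⁅e, v⁆ ∈ Q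
        rw [hv.lie_eq_zero χ hχ e he]
        exact Q.zero_mem
      · exact hQ f ⟨χ, hχ, hf⟩ v hvQ
    exact (htop ▸ Submodule.mem_top : y ∈ Q.comap _)

lemma lowerSpace_eq_top (hα : IsBase H α) (hv : IsHighestWeightGenerator α μ v) :
    lowerSpace α μ X = ⊤ := by
  rw [← LieSubmodule.toSubmodule_eq_top]
  exact hv.eq_top_of_stable hα (mem_lowerSpace_of_mem_weightSpace hv.mem_weightSpace)
    fun χ hχ f hf x hx => strictlyLowerSpace_le_lowerSpace (lie_mem_strictlyLowerSpace hχ hf hx)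

lemma exists_smul_add (hα : IsBase H α) (hv : IsHighestWeightGenerator α μ v) (x : X) :
    ∃ c : ℂ, ∃ y ∈ strictlyLowerSpace α μ X, x = c • v + y := by
  have htop : Submodule.span ℂ {v} ⊔ (strictlyLowerSpace α μ X).toSubmodule = ⊤ := by
    refine hv.eq_top_of_stable hα (Submodule.mem_sup_left (Submodule.mem_span_singleton_self v))
      fun χ hχ f hf x _ => Submodule.mem_sup_right (lie_mem_strictlyLowerSpace hχ hf ?_)
    rw [hv.lowerSpace_eq_top hα]
    exact LieSubmodule.mem_top x
  obtain ⟨a, ha, y, hy, rfl⟩ := Submodule.mem_sup.1 (htop ▸ Submodule.mem_top : x ∈ _)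
  obtain ⟨c, rfl⟩ := Submodule.mem_span_singleton.1 ha
  exact ⟨c, y, hy, rfl⟩

lemma exists_weight_eq (hα : IsBase H α) (hv : IsHighestWeightGenerator α μ v)
    {ν : Module.Dual ℂ H} {x : X} (hx : x ∈ weightSpace X ν) (hx0 : x ≠ 0) :
    ∃ c, ν = μ - rootCombination α c := by
  obtain ⟨c, y, hyν, hy0, hyc⟩ := exists_mem_weightSpace_of_mem_iSup
    (fun c => ⇑(μ - rootCombination α c)) (weightSpace X ν) hx
    (by rw [← lowerSpace, hv.lowerSpace_eq_top hα]; exact LieSubmodule.mem_top x) hx0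
  exact ⟨c, DFunLike.coe_injective (eq_of_mem_weightSpace hyν hyc hy0)⟩

lemma exists_eq_smul (hα : IsBase H α) (hv : IsHighestWeightGenerator α μ v) {x : X}
    (hx : x ∈ weightSpace X μ) : ∃ c : ℂ, x = c • v := by
  obtain ⟨c, y, hy, rfl⟩ := hv.exists_smul_add hα x
  have hyμ : y ∈ weightSpace X μ := by
    simpa only [add_sub_cancel_left] using
      sub_mem hx ((weightSpace X μ).smul_mem c hv.mem_weightSpace)
  exact ⟨c, by rw [eq_zero_of_mem_strictlyLowerSpace hα.indep hyμ hy, add_zero]⟩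

lemma eq_top_of_mem_weightSpace (hα : IsBase H α) (hv : IsHighestWeightGenerator α μ v)
    {N : LieSubmodule ℂ L X} {x : X} (hxN : x ∈ N) (hx : x ∈ weightSpace X μ) (hx0 : x ≠ 0) :
    N = ⊤ := by
  obtain ⟨c, rfl⟩ := hv.exists_eq_smul hα hx
  have hvN : v ∈ N := by
    rw [← inv_smul_smul₀ (left_ne_zero_of_smul hx0) v]
    exact N.smul_mem c⁻¹ hxN
  rw [eq_top_iff, ← hv.lieSpan_eq_top]
  exact LieSubmodule.lieSpan_le.2 (Set.singleton_subset_iff.2 hvN)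

/-- A weight vector of `N` whose weight is as high as possible is singular. -/
lemma exists_isSingularVector (hα : IsBase H α) (hv : IsHighestWeightGenerator α μ v)
    {N : LieSubmodule ℂ L X} (hN : N ≠ ⊥) :
    ∃ c, ∃ s ∈ N, s ≠ 0 ∧ IsSingularVector α (μ - rootCombination α c) s := by
  obtain ⟨x, hxN, hx0⟩ : ∃ x ∈ N, x ≠ 0 := by
    simpa only [ne_eq, N.eq_bot_iff, not_forall, exists_prop] using hN
  let C : Set (Fin r → ℕ) := {c | ∃ s ∈ N, s ≠ 0 ∧ s ∈ weightSpace X ⇑(μ - rootCombination α c)}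
  have hC : C.Nonempty := by
    obtain ⟨c, s, hsN, hs0, hs⟩ := exists_mem_weightSpace_of_mem_iSup
      (fun c => ⇑(μ - rootCombination α c))
      ({ N.toSubmodule with lie_mem := fun {h m} hm => N.lie_mem hm } : LieSubmodule ℂ H X) hxN
      (by rw [← lowerSpace, hv.lowerSpace_eq_top hα]; exact LieSubmodule.mem_top x) hx0
    exact ⟨c, s, hsN, hs0, hs⟩
  obtain ⟨c, ⟨s, hsN, hs0, hs⟩, hmin⟩ := WellFounded.has_min wellFounded_lt C hC
  refine ⟨c, s, hsN, hs0, hs, fun χ hχ e he => ?_⟩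
  by_contra hes
  obtain ⟨d, hd, rfl⟩ := hχ.exists_rootCombination
  have hes' := lie_mem_weightSpace he hs
  obtain ⟨c', hc'⟩ := hv.exists_weight_eq hα hes' hes
  have hcc' : c = c' + d := by
    refine rootCombination_injective hα.indep ?_
    rw [map_add]
    rw [← sub_eq_zero] at hc' ⊢
    rw [← neg_eq_zero, ← hc']
    abel
  rw [hc'] at hes'
  refine hmin c' ⟨_, N.lie_mem hsN, hes, hes'⟩ ?_
  rw [hcc']
  exact lt_add_of_pos_right c' (pos_iff_ne_zero.2 hd)

end IsHighestWeightGenerator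

end HighestWeight

section Integrability

variable {L : Type} [LieRing L] [LieAlgebra ℂ L] {H : LieSubalgebra ℂ L} [H.IsCartanSubalgebra]
  {r : ℕ} {α : Fin r → Module.Dual ℂ H}
  {X : Type*} [AddCommGroup X] [Module ℂ X] [LieRingModule L X] [LieModule ℂ L X]

/-- An integrable vector: one on which the root vectors of every negative simple root `-α j` act
nilpotently. -/
def IsIntegrableVector (α : Fin r → Module.Dual ℂ H) (v : X) : Prop :=
  ∀ j, ∀ f ∈ rootSpace H ⇑(-α j), ∃ n : ℕ, (toEnd ℂ L X f ^ n) v = 0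

variable [FiniteDimensional ℂ L] [LieAlgebra.IsKilling ℂ L]

lemma IsCoroot.exists_isSl2Triple {χ : Module.Dual ℂ H} {t : H} (ht : IsCoroot H χ t) :
    ∃ e ∈ rootSpace H χ, ∃ f ∈ rootSpace H ⇑(-χ), IsSl2Triple (t : L) e f := by
  obtain ⟨hχt, e, he, f, hf, htef⟩ := ht
  refine ⟨e, he, f, hf, ?_, htef.symm, ?_, ?_⟩
  · intro ht0
    rw [show t = 0 from Subtype.ext ht0, map_zero] at hχt
    exact two_ne_zero hχt.symm
  · rw [mem_rootSpace_iff.1 he t, hχt, two_smul, two_nsmul]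
  · rw [mem_rootSpace_iff.1 hf t, LinearMap.neg_apply, hχt, neg_smul, two_smul, two_nsmul]

lemma isIntegrableVector_of_finiteDimensional [FiniteDimensional ℂ X] (hα : IsBase H α) (v : X) :
    IsIntegrableVector α v := by
  intro j f hf
  obtain ⟨n, hn⟩ := LieModule.isNilpotent_toEnd_of_mem_rootSpace (K := ℂ) (M := X) H
    (fun h => (hα.isRoot j).neg.1 (DFunLike.coe_injective h)) hf
  exact ⟨n, by rw [hn, LinearMap.zero_apply]⟩

/-- The vectors on which `f` acts nilpotently form an `L`-submodule, because `ad f` is nilpotent. -/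
lemma IsIntegrableVector.of_lieSpan_eq_top (hα : IsBase H α) {v : X} (hv : IsIntegrableVector α v)
    (hspan : LieSubmodule.lieSpan ℂ L {v} = ⊤) (x : X) : IsIntegrableVector α x := by
  intro j f hf
  have had (y : L) : y ∈ (toEnd ℂ L L f).maxGenEigenspace 0 := by
    simpa only [Module.End.mem_maxGenEigenspace, zero_smul, sub_zero] using
      isIntegrableVector_of_finiteDimensional hα y j f hf
  let N : LieSubmodule ℂ L X :=
    { (toEnd ℂ L X f).maxGenEigenspace 0 with
      lie_mem := fun {y m} hm => by
        have hym := lie_mem_maxGenEigenspace_toEnd (had y) hm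
        rwa [zero_add] at hym }
  have mem_N {y : X} : y ∈ N ↔ ∃ n : ℕ, (toEnd ℂ L X f ^ n) y = 0 := by
    change y ∈ (toEnd ℂ L X f).maxGenEigenspace 0 ↔ _
    simp only [Module.End.mem_maxGenEigenspace, zero_smul, sub_zero]
  have hN : LieSubmodule.lieSpan ℂ L {v} ≤ N :=
    LieSubmodule.lieSpan_le.2 (Set.singleton_subset_iff.2 (mem_N.2 (hv j f hf)))
  exact mem_N.1 (hN (hspan ▸ LieSubmodule.mem_top x))

/-- If `f ^ (m + 1)` is the smallest power killing `s`, then `0 = e f ^ (m + 1) s` is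
`(m + 1) (ν (hc j) - m)` times `f ^ m s`. -/
lemma IsSingularVector.isDomInt (hα : IsBase H α) {hc : Fin r → H}
    (hco : ∀ j, IsCoroot H (α j) (hc j)) {ν : Module.Dual ℂ H} {s : X}
    (hs : IsSingularVector α ν s) (hs0 : s ≠ 0) (hint : IsIntegrableVector α s) :
    IsDomInt hc ν := by
  intro j
  obtain ⟨e, he, f, hf, hef⟩ := (hco j).exists_isSl2Triple
  have hprim : hef.HasPrimitiveVectorWith s (ν (hc j)) :=
    ⟨hs0, hs.lie_eq_smul _, hs.lie_eq_zero _ (hα.isPosRoot j) e he⟩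
  have hnil := hint j f hf
  obtain ⟨m, hm⟩ : ∃ m, Nat.find hnil = m + 1 := by
    refine Nat.exists_eq_succ_of_ne_zero fun h0 => hs0 ?_
    simpa only [h0, pow_zero, Module.End.one_apply] using Nat.find_spec hnil
  have hsucc := hm ▸ Nat.find_spec hnil
  have hne := Nat.find_min hnil (show m < Nat.find hnil by omega)
  have hlie := hprim.lie_e_pow_succ_toEnd_f m
  rw [hsucc, lie_zero] at hlie
  have hmul := (smul_eq_zero.1 hlie.symm).resolve_right hne
  exact ⟨m, sub_eq_zero.1 ((mul_eq_zero.1 hmul).resolve_left (Nat.cast_add_one_ne_zero m))⟩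

end Integrability

section CasimirTensor

variable (K L X : Type*) [Field K] [LieRing L] [LieAlgebra K L]
  [AddCommGroup X] [Module K X] [LieRingModule L X] [LieModule K L X]

/-- The equivariant map `L ⊗ L → End L` sending `a ⊗ b` to `y ↦ κ(a, y) b`, where `κ` is the
Killing form. -/
noncomputable def killingTensorHom : L ⊗[K] L →ₗ⁅K,L⁆ L →ₗ[K] L :=
  TensorProduct.LieModule.liftLie K L L L (L →ₗ[K] L)
    { LinearMap.mk₂ K (fun a b => (killingForm K L a).smulRight b)
        (by intros; ext; simp [add_smul]) (by intros; ext; simp [mul_smul])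
        (by intros; ext; simp) (by intros; ext; exact smul_comm _ _ _) with
      map_lie' := by
        intro x a
        ext b y
        have hκ : killingForm K L ⁅x, a⁆ y = -killingForm K L a ⁅x, y⁆ := by
          rw [← lie_skew, map_neg, LinearMap.neg_apply, traceForm_apply_lie_apply]
        change killingForm K L ⁅x, a⁆ y • b =
          ⁅x, killingForm K L a y • b⁆ - killingForm K L a ⁅x, y⁆ • b - killingForm K L a y • ⁅x, b⁆
        rw [hκ, lie_smul, neg_smul]
        abel }

lemma killingTensorHom_tmul_apply (a b y : L) :
    killingTensorHom K L (a ⊗ₜ b) y = killingForm K L a y • b := by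
  simp [killingTensorHom]

/-- The equivariant map `L ⊗ L → End X` sending `a ⊗ b` to `x ↦ ⁅a, ⁅b, x⁆⁆`. -/
noncomputable def tensorAction : L ⊗[K] L →ₗ⁅K,L⁆ X →ₗ[K] X :=
  TensorProduct.LieModule.liftLie K L L L (X →ₗ[K] X)
    { LinearMap.mk₂ K (fun a b => toEnd K L X a ∘ₗ toEnd K L X b)
        (by intros; ext; simp) (by intros; ext; simp)
        (by intros; ext; simp) (by intros; ext; simp) with
      map_lie' := by
        intro x a
        ext b m
        change ⁅⁅x, a⁆, ⁅b, m⁆⁆ = ⁅x, ⁅a, ⁅b, m⁆⁆⁆ - ⁅a, ⁅b, ⁅x, m⁆⁆⁆ - ⁅a, ⁅⁅x, b⁆, m⁆⁆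
        rw [leibniz_lie x a, leibniz_lie x b, lie_add]
        abel }

lemma tensorAction_tmul_apply (a b : L) (x : X) :
    tensorAction K L X (a ⊗ₜ b) x = ⁅a, ⁅b, x⁆⁆ := by
  simp [tensorAction]

variable [LieAlgebra.IsKilling K L] [FiniteDimensional K L]

lemma killingTensorHom_injective : Function.Injective (killingTensorHom K L) := by
  have hκ : Function.Injective (killingForm K L) :=
    LinearMap.ker_eq_bot.1 (LieAlgebra.IsKilling.ker_killingForm_eq_bot K L)
  have hfactor : (killingTensorHom K L : L ⊗[K] L →ₗ[K] L →ₗ[K] L) =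
      (dualTensorHomEquiv K L L).toLinearMap ∘ₗ
        (killingForm K L : L →ₗ[K] Module.Dual K L).rTensor L := by
    ext a b y
    simp [killingTensorHom_tmul_apply, dualTensorHom_apply]
  rw [← LieModuleHom.coe_toLinearMap, hfactor]
  exact (dualTensorHomEquiv K L L).injective.comp
    (Module.Flat.rTensor_preserves_injective_linearMap _ hκ)

variable {K L X} in
/-- The tensor `t` is invariant since `killingTensorHom` is equivariant and injective. -/
lemma tensorAction_lie_of_killingTensorHom_eq_id {t : L ⊗[K] L}
    (ht : killingTensorHom K L t = LinearMap.id) (y : L) (x : X) :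
    tensorAction K L X t ⁅y, x⁆ = ⁅y, tensorAction K L X t x⁆ := by
  have hyt : ⁅y, t⁆ = 0 := by
    apply killingTensorHom_injective
    ext z
    simp [ht]
  have hlie : ⁅y, tensorAction K L X t⁆ x = 0 := by
    rw [← LieModuleHom.map_lie, hyt, map_zero, LinearMap.zero_apply]
  rw [LieHom.lie_apply] at hlie
  exact (sub_eq_zero.1 hlie).symm

end CasimirTensor

section Casimir

variable {L : Type} [LieRing L] [LieAlgebra ℂ L] {H : LieSubalgebra ℂ L} [H.IsCartanSubalgebra]
  {r : ℕ} {α : Fin r → Module.Dual ℂ H}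

lemma IsBase.add_ne_zero (hα : IsBase H α) {χ ψ : Module.Dual ℂ H} (hχ : IsPosRoot H α χ)
    (hψ : IsPosRoot H α ψ) : χ + ψ ≠ 0 := by
  obtain ⟨c, hc, rfl⟩ := hχ.exists_rootCombination
  obtain ⟨d, -, rfl⟩ := hψ.exists_rootCombination
  exact fun h => hc (eq_zero_of_rootCombination_add_eq_zero hα.indep h)

variable [FiniteDimensional ℂ L]

lemma killingForm_eq_zero_of_mem_rootSpace {χ ψ : Module.Dual ℂ H} {x y : L}
    (hx : x ∈ rootSpace H χ) (hy : y ∈ rootSpace H ψ) (h : χ + ψ ≠ 0) : killingForm ℂ L x y = 0 :=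
  killingForm_apply_eq_zero_of_mem_rootSpace_of_add_ne_zero ℂ L H hx hy
    fun h0 => h (DFunLike.coe_injective h0)

lemma mem_rootSpace_zero (h : H) : (h : L) ∈ rootSpace H ⇑(0 : Module.Dual ℂ H) := by
  change (h : L) ∈ rootSpace H (0 : H → ℂ)
  rw [rootSpace_zero_eq]
  exact h.2

/-- A pair of root vectors for `χ` and `-χ`, dual under the Killing form. -/
structure IsDualRootPair (χ : Module.Dual ℂ H) (e f : L) : Prop where
  isRoot : IsRoot H χ
  mem_rootSpace : e ∈ rootSpace H χ
  mem_rootSpace_neg : f ∈ rootSpace H ⇑(-χ)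
  killingForm_eq_one : killingForm ℂ L e f = 1

lemma IsDualRootPair.killingTensorHom_apply_eq_zero {χ ψ : Module.Dual ℂ H} {e f x : L}
    (h : IsDualRootPair χ e f) (hx : x ∈ rootSpace H ψ)
    (hψ : ψ ≠ χ) (hψ' : ψ ≠ -χ) : killingTensorHom ℂ L (e ⊗ₜ f + f ⊗ₜ e) x = 0 := by
  rw [map_add, LinearMap.add_apply, killingTensorHom_tmul_apply, killingTensorHom_tmul_apply,
    killingForm_eq_zero_of_mem_rootSpace h.mem_rootSpace hx
      fun h0 => hψ' (eq_neg_of_add_eq_zero_right h0),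
    killingForm_eq_zero_of_mem_rootSpace h.mem_rootSpace_neg hx
      fun h0 => hψ (neg_add_eq_zero.1 h0).symm, zero_smul, zero_smul, add_zero]

lemma finite_setOf_isPosRoot (α : Fin r → Module.Dual ℂ H) : {χ | IsPosRoot H α χ}.Finite :=
  (Set.finite_range fun χ : Weight ℂ H L => χ.toLinear ℂ H L).subset
    fun _ hχ => ⟨hχ.1.toWeight, rfl⟩

/-- The finite set of positive roots. -/
noncomputable def positiveRoots (α : Fin r → Module.Dual ℂ H) : Finset (Module.Dual ℂ H) :=
  (finite_setOf_isPosRoot α).toFinset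

lemma mem_positiveRoots {χ : Module.Dual ℂ H} : χ ∈ positiveRoots α ↔ IsPosRoot H α χ := by
  rw [positiveRoots, Set.Finite.mem_toFinset, Set.mem_ofPred_eq]

variable [LieAlgebra.IsKilling ℂ L]
  {X : Type*} [AddCommGroup X] [Module ℂ X] [LieRingModule L X] [LieModule ℂ L X]

variable (H) in
/-- The element `t_ν` of `H` representing the functional `ν` through the Killing form. -/
noncomputable def killingDual : Module.Dual ℂ H ≃ₗ[ℂ] H := (IsKilling.cartanEquivDual H).symm

lemma killingForm_killingDual (ν : Module.Dual ℂ H) (h : H) :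
    killingForm ℂ L (killingDual H ν : L) (h : L) = ν h :=
  LinearMap.congr_fun ((IsKilling.cartanEquivDual H).apply_symm_apply ν) h

lemma apply_killingDual_comm (ν χ : Module.Dual ℂ H) :
    ν (killingDual H χ) = χ (killingDual H ν) := by
  rw [← killingForm_killingDual, ← killingForm_killingDual, traceForm_comm]

lemma IsRoot.exists_eq_smul {χ : Module.Dual ℂ H} (hχ : IsRoot H χ) {e x : L}
    (he : e ∈ rootSpace H χ) (he0 : e ≠ 0) (hx : x ∈ rootSpace H χ) : ∃ c : ℂ, x = c • e := by
  have hrank := IsKilling.finrank_rootSpace_eq_one hχ.toWeight hχ.isNonZero_toWeight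
  obtain ⟨c, hc⟩ := (finrank_eq_one_iff_of_nonzero' (⟨e, he⟩ : rootSpace H χ)
    fun h => he0 (congrArg Subtype.val h)).1 hrank ⟨x, hx⟩
  exact ⟨c, (congrArg Subtype.val hc).symm⟩

lemma IsRoot.lie_eq_killingForm_smul {χ : Module.Dual ℂ H} (hχ : IsRoot H χ) {e f : L}
    (he : e ∈ rootSpace H χ) (hf : f ∈ rootSpace H ⇑(-χ)) :
    ⁅e, f⁆ = killingForm ℂ L e f • (killingDual H χ : L) :=
  IsKilling.lie_eq_killingForm_smul_of_mem_rootSpace_of_mem_rootSpace_neg (α := hχ.toWeight) he hf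

lemma IsRoot.exists_isDualRootPair {χ : Module.Dual ℂ H} (hχ : IsRoot H χ) :
    ∃ e f, IsDualRootPair χ e f := by
  obtain ⟨h, e, f, hef, he, hf⟩ := IsKilling.exists_isSl2Triple_of_weight_isNonZero
    hχ.isNonZero_toWeight
  have hκ : killingForm ℂ L e f ≠ 0 := by
    intro h0
    have hlie := hχ.lie_eq_killingForm_smul he hf
    rw [h0, zero_smul, hef.lie_e_f] at hlie
    exact hef.h_ne_zero hlie
  refine ⟨(killingForm ℂ L e f)⁻¹ • e, f, hχ, (rootSpace H χ).smul_mem _ he, hf, ?_⟩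
  rw [map_smul, LinearMap.smul_apply, smul_eq_mul, inv_mul_cancel₀ hκ]

namespace IsDualRootPair

variable {χ ν : Module.Dual ℂ H} {e f x : L}

lemma neg (h : IsDualRootPair χ e f) : IsDualRootPair (-χ) f e where
  isRoot := h.isRoot.neg
  mem_rootSpace := h.mem_rootSpace_neg
  mem_rootSpace_neg := by
    rw [neg_neg]
    exact h.mem_rootSpace
  killingForm_eq_one := (traceForm_comm ℂ L L f e).trans h.killingForm_eq_one

lemma killingTensorHom_apply_eq_self (h : IsDualRootPair χ e f) (hx : x ∈ rootSpace H χ) :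
    killingTensorHom ℂ L (e ⊗ₜ f + f ⊗ₜ e) x = x := by
  have he0 : e ≠ 0 := by
    rintro rfl
    simpa using h.killingForm_eq_one
  obtain ⟨c, rfl⟩ := h.isRoot.exists_eq_smul h.mem_rootSpace he0 hx
  have hχχ : χ + χ ≠ 0 := by
    rw [← two_smul ℂ]
    exact smul_ne_zero two_ne_zero h.isRoot.1
  have hee : killingForm ℂ L e (c • e) = 0 :=
    killingForm_eq_zero_of_mem_rootSpace h.mem_rootSpace hx hχχ
  rw [map_add, LinearMap.add_apply, killingTensorHom_tmul_apply, killingTensorHom_tmul_apply, hee,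
    map_smul, h.neg.killingForm_eq_one, smul_eq_mul, mul_one, zero_smul, zero_add]

lemma tensorAction_apply (h : IsDualRootPair χ e f) (hχ : IsPosRoot H α χ) {s : X}
    (hs : IsSingularVector α ν s) :
    tensorAction ℂ L X (e ⊗ₜ f + f ⊗ₜ e) s = ν (killingDual H χ) • s := by
  have hlie : ⁅e, f⁆ = (killingDual H χ : L) := by
    rw [h.isRoot.lie_eq_killingForm_smul h.mem_rootSpace h.mem_rootSpace_neg,
      h.killingForm_eq_one, one_smul]
  rw [map_add, LinearMap.add_apply, tensorAction_tmul_apply, tensorAction_tmul_apply, leibniz_lie,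
    hlie, hs.lie_eq_zero χ hχ e h.mem_rootSpace, lie_zero, add_zero, add_zero,
    hs.lie_eq_smul]

end IsDualRootPair

variable (H) in
/-- The element of `H ⊗ H` inverse to the restriction of the Killing form to `H`. -/
noncomputable def cartanTensor : L ⊗[ℂ] L :=
  ∑ i, (killingDual H ((finBasis ℂ H).coord i) : L) ⊗ₜ[ℂ] (finBasis ℂ H i : L)

lemma killingTensorHom_cartanTensor_coe (h : H) :
    killingTensorHom ℂ L (cartanTensor H) (h : L) = h := by
  have hsum := congrArg H.toSubmodule.subtype ((finBasis ℂ H).sum_repr h)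
  rw [map_sum] at hsum
  simp only [cartanTensor, map_sum, LinearMap.sum_apply, killingTensorHom_tmul_apply,
    killingForm_killingDual]
  exact hsum

lemma killingTensorHom_cartanTensor_eq_zero {χ : Module.Dual ℂ H} (hχ : χ ≠ 0) {x : L}
    (hx : x ∈ rootSpace H χ) : killingTensorHom ℂ L (cartanTensor H) x = 0 := by
  simp only [cartanTensor, map_sum, LinearMap.sum_apply, killingTensorHom_tmul_apply]
  refine Finset.sum_eq_zero fun i _ => ?_
  rw [killingForm_eq_zero_of_mem_rootSpace (mem_rootSpace_zero _) hx (by rwa [zero_add]), zero_smul]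

lemma tensorAction_cartanTensor {ν : Module.Dual ℂ H} {x : X} (hx : x ∈ weightSpace X ν) :
    tensorAction ℂ L X (cartanTensor H) x = ν (killingDual H ν) • x := by
  have hlie (h : H) : ⁅(h : L), x⁆ = ν h • x := (mem_weightSpace _ _).1 hx h
  have hν := congrArg ν ((finBasis ℂ H).sum_repr (killingDual H ν))
  simp only [map_sum, map_smul, smul_eq_mul] at hν
  simp only [cartanTensor, map_sum, LinearMap.sum_apply, tensorAction_tmul_apply, hlie, lie_smul,
    smul_smul, ← Finset.sum_smul]
  congr 1
  rw [← hν]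
  refine Finset.sum_congr rfl fun i _ => ?_
  rw [apply_killingDual_comm ν, Basis.coord_apply, mul_comm]

lemma IsBase.exists_killingTensorHom_eq_id (hα : IsBase H α) : ∃ e f : Module.Dual ℂ H → L,
    (∀ β ∈ positiveRoots α, IsDualRootPair β (e β) (f β)) ∧
    killingTensorHom ℂ L
      (cartanTensor H + ∑ β ∈ positiveRoots α, (e β ⊗ₜ f β + f β ⊗ₜ e β)) = LinearMap.id := by
  have hpair (β : Module.Dual ℂ H) :
      ∃ e f : L, β ∈ positiveRoots α → IsDualRootPair β e f := by
    by_cases hβ : β ∈ positiveRoots α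
    · obtain ⟨e, f, h⟩ := (mem_positiveRoots.1 hβ).1.exists_isDualRootPair
      exact ⟨e, f, fun _ => h⟩
    · exact ⟨0, 0, fun h => absurd h hβ⟩
  choose e f hef using hpair
  refine ⟨e, f, hef, ?_⟩
  rw [← LinearMap.eqLocus_eq_top]
  refine hα.eq_top_of_rootSpace_le (fun h hh => ?_) (fun χ hχ x hx => ?_) fun χ hχ x hx => ?_ <;>
    rw [LinearMap.mem_eqLocus, map_add, map_sum, LinearMap.add_apply, LinearMap.sum_apply,
      LinearMap.id_apply]
  · rw [killingTensorHom_cartanTensor_coe ⟨h, hh⟩, Finset.sum_eq_zero, add_zero]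
    intro β hβ
    have hβ0 := (mem_positiveRoots.1 hβ).1.1
    exact (hef β hβ).killingTensorHom_apply_eq_zero (mem_rootSpace_zero ⟨h, hh⟩) hβ0.symm
      (neg_ne_zero.2 hβ0).symm
  · rw [killingTensorHom_cartanTensor_eq_zero hχ.1.1 hx, zero_add, Finset.sum_eq_single χ]
    · exact (hef χ (mem_positiveRoots.2 hχ)).killingTensorHom_apply_eq_self hx
    · exact fun β hβ hβχ => (hef β hβ).killingTensorHom_apply_eq_zero hx hβχ.symm
        fun h => hα.add_ne_zero hχ (mem_positiveRoots.1 hβ) (eq_neg_iff_add_eq_zero.1 h)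
    · exact fun h => absurd (mem_positiveRoots.2 hχ) h
  · rw [killingTensorHom_cartanTensor_eq_zero hχ.1.neg.1 hx, zero_add, Finset.sum_eq_single χ]
    · rw [add_comm]
      exact (hef χ (mem_positiveRoots.2 hχ)).neg.killingTensorHom_apply_eq_self hx
    · exact fun β hβ hβχ => (hef β hβ).killingTensorHom_apply_eq_zero hx
        (fun h => hα.add_ne_zero hχ (mem_positiveRoots.1 hβ) (neg_eq_iff_add_eq_zero.1 h))
        fun h => hβχ (neg_injective h).symm
    · exact fun h => absurd (mem_positiveRoots.2 hχ) h

/-- The scalar `⟨ν, ν⟩ + ⟨ν, 2ρ⟩` by which the Casimir element acts on a highest weight module of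
highest weight `ν`. -/
noncomputable def casimirScalar (α : Fin r → Module.Dual ℂ H) (ν : Module.Dual ℂ H) : ℂ :=
  ν (killingDual H ν) + ∑ β ∈ positiveRoots α, ν (killingDual H β)

lemma IsBase.exists_casimir (hα : IsBase H α) (X : Type*) [AddCommGroup X] [Module ℂ X]
    [LieRingModule L X] [LieModule ℂ L X] :
    ∃ Ω : X →ₗ[ℂ] X, (∀ (y : L) (x : X), Ω ⁅y, x⁆ = ⁅y, Ω x⁆) ∧
      ∀ ν (s : X), IsSingularVector α ν s → Ω s = casimirScalar α ν • s := by
  obtain ⟨e, f, hef, hid⟩ := hα.exists_killingTensorHom_eq_id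
  refine ⟨_, tensorAction_lie_of_killingTensorHom_eq_id hid, fun ν s hs => ?_⟩
  rw [map_add, map_sum, LinearMap.add_apply, LinearMap.sum_apply,
    tensorAction_cartanTensor hs.mem_weightSpace, casimirScalar, add_smul, Finset.sum_smul]
  congr 1
  exact Finset.sum_congr rfl fun β hβ =>
    (hef β hβ).tensorAction_apply (mem_positiveRoots.1 hβ) hs

lemma IsHighestWeightGenerator.casimirScalar_eq (hα : IsBase H α) {μ ν : Module.Dual ℂ H}
    {v s : X} (hv : IsHighestWeightGenerator α μ v) (hs : IsSingularVector α ν s) (hs0 : s ≠ 0) :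
    casimirScalar α ν = casimirScalar α μ := by
  obtain ⟨Ω, hΩ, hΩs⟩ := hα.exists_casimir X
  let N : LieSubmodule ℂ L X :=
    { Module.End.eigenspace Ω (casimirScalar α μ) with
      lie_mem := fun {y x} (hx : x ∈ Module.End.eigenspace Ω _) => by
        change ⁅y, x⁆ ∈ Module.End.eigenspace Ω _
        rw [Module.End.mem_eigenspace_iff] at hx ⊢
        rw [hΩ, hx, lie_smul] }
  have hN : LieSubmodule.lieSpan ℂ L {v} ≤ N := LieSubmodule.lieSpan_le.2 <|
    Set.singleton_subset_iff.2 (Module.End.mem_eigenspace_iff.2 (hΩs μ v hv.toIsSingularVector))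
  have hsN : Ω s = casimirScalar α μ • s :=
    Module.End.mem_eigenspace_iff.1 (hN (hv.lieSpan_eq_top ▸ LieSubmodule.mem_top s))
  exact smul_left_injective ℂ hs0 ((hΩs ν s hs).symm.trans hsN)

end Casimir

section Irreducibility

variable {L : Type} [LieRing L] [LieAlgebra ℂ L] {H : LieSubalgebra ℂ L} {r : ℕ}
  {α : Fin r → Module.Dual ℂ H}

lemma eq_single_of_rootCombination_eq_smul (hα : LinearIndependent ℂ α) {c : Fin r → ℕ} {z : ℂ}
    {j : Fin r} (h : rootCombination α c = z • α j) : c = Pi.single j (c j) := by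
  have hsum : ∑ i, ((c i : ℂ) - if i = j then z else 0) • α i = 0 := by
    simp only [sub_smul, Finset.sum_sub_distrib, ite_smul, zero_smul, Finset.sum_ite_eq',
      Finset.mem_univ, if_true]
    rw [← rootCombination_apply, h, sub_self]
  ext i
  rcases eq_or_ne i j with rfl | hij
  · rw [Pi.single_eq_same]
  · have hi := Fintype.linearIndependent_iff.1 hα _ hsum i
    rw [if_neg hij, sub_zero] at hi
    rw [Pi.single_eq_of_ne hij]
    exact_mod_cast hi

variable [H.IsCartanSubalgebra] [FiniteDimensional ℂ L] [LieAlgebra.IsKilling ℂ L]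

lemma IsCoroot.eq_coroot {χ : Module.Dual ℂ H} {t : H} (ht : IsCoroot H χ t) (hχ : IsRoot H χ) :
    t = IsKilling.coroot hχ.toWeight := by
  obtain ⟨e, he, f, hf, hef⟩ := ht.exists_isSl2Triple
  exact Subtype.ext (hef.h_eq_coroot hχ.isNonZero_toWeight he hf)

lemma IsCoroot.exists_int_eq {χ : Module.Dual ℂ H} {t : H} (ht : IsCoroot H χ t)
    (hχ : IsRoot H χ) (β : Weight ℂ H L) : ∃ z : ℤ, β t = z := by
  rw [ht.eq_coroot hχ]
  exact ⟨_, IsKilling.apply_coroot_eq_cast hχ.toWeight β⟩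

lemma IsCoroot.exists_killingForm_eq_ofReal {χ : Module.Dual ℂ H} {t : H} (ht : IsCoroot H χ t)
    (hχ : IsRoot H χ) : ∃ q : ℝ, 0 ≤ q ∧ killingForm ℂ L (t : L) (t : L) = q := by
  choose z hz using ht.exists_int_eq hχ
  refine ⟨∑ β ∈ H.root, (z β : ℝ) * z β, Finset.sum_nonneg fun β _ => mul_self_nonneg _, ?_⟩
  have hκ := congrArg (fun B => B t t)
    (IsKilling.restrict_killingForm_eq_sum (K := ℂ) (L := L) (H := H))
  simp only [LinearMap.sum_apply, LinearMap.smulRight_apply, LinearMap.smul_apply] at hκ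
  refine hκ.trans ?_
  push_cast
  exact Finset.sum_congr rfl fun β _ => congrArg₂ (· * ·) (hz β) (hz β)

lemma IsCoroot.exists_killingDual_eq_smul {χ : Module.Dual ℂ H} {t : H} (ht : IsCoroot H χ t)
    (hχ : IsRoot H χ) : ∃ k : ℝ, 0 < k ∧ killingDual H χ = (k : ℂ) • t := by
  have hne : χ (killingDual H χ) ≠ 0 :=
    IsKilling.root_apply_cartanEquivDual_symm_ne_zero hχ.isNonZero_toWeight
  obtain ⟨k, hk⟩ : ∃ k : ℂ, killingDual H χ = k • t := by
    refine ⟨χ (killingDual H χ) / 2, ?_⟩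
    have ht' : t = (2 : ℂ) • (χ (killingDual H χ))⁻¹ • killingDual H χ :=
      (ht.eq_coroot hχ).trans (ofNat_smul_eq_nsmul ℂ 2 _).symm
    rw [ht', smul_smul, smul_smul, div_mul_cancel₀ _ two_ne_zero, mul_inv_cancel₀ hne, one_smul]
  obtain ⟨q, hq0, hq⟩ := ht.exists_killingForm_eq_ofReal hχ
  have hkq : k * q = 2 := by
    rw [← ht.1, ← killingForm_killingDual, hk, ← hq, Submodule.coe_smul, map_smul,
      LinearMap.smul_apply, smul_eq_mul]
  have hq' : (q : ℂ) ≠ 0 := right_ne_zero_of_mul (hkq ▸ two_ne_zero)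
  refine ⟨2 / q, div_pos two_pos (hq0.lt_of_ne fun h => hq' (by rw [← h, Complex.ofReal_zero])), ?_⟩
  rw [hk, eq_div_of_mul_eq hq' hkq]
  push_cast
  rfl

lemma IsRoot.sub_smul {χ β : Module.Dual ℂ H} (hβ : IsRoot H β) (hχ : IsRoot H χ) {t : H}
    (ht : IsCoroot H χ t) : IsRoot H (β - β t • χ) := by
  rw [ht.eq_coroot hχ]
  exact ⟨fun h => IsKilling.reflectRoot_isNonZero hχ.toWeight hβ.toWeight hβ.isNonZero_toWeight
    (congrArg DFunLike.coe h), (IsKilling.reflectRoot hχ.toWeight hβ.toWeight).2⟩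

lemma IsBase.eq_of_isPosRoot_smul (hα : IsBase H α) {j : Fin r} {z : ℂ}
    (h : IsPosRoot H α (z • α j)) : z • α j = α j := by
  rcases IsKilling.eq_neg_or_eq_of_eq_smul _ _ h.1.isNonZero_toWeight z
      (show ⇑h.1.toWeight = z • ⇑(hα.isRoot j).toWeight from rfl) with hneg | heq
  · refine absurd ?_ (hα.add_ne_zero h (hα.isPosRoot j))
    rw [show z • α j = -α j from DFunLike.coe_injective
      (congrArg (DFunLike.coe : Weight ℂ H L → H → ℂ) hneg), neg_add_cancel]
  · exact DFunLike.coe_injective (congrArg (DFunLike.coe : Weight ℂ H L → H → ℂ) heq)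

lemma IsBase.eq_of_add_rootCombination_eq_smul (hα : IsBase H α) {j : Fin r}
    {β : Module.Dual ℂ H} (hβ : IsPosRoot H α β) {d : Fin r → ℕ} {z : ℂ}
    (h : β + rootCombination α d = z • α j) : β = α j := by
  obtain ⟨c, -, rfl⟩ := hβ.exists_rootCombination
  rw [← map_add] at h
  have hc : c = Pi.single j (c j) := by
    ext i
    rcases eq_or_ne i j with rfl | hij
    · rw [Pi.single_eq_same]
    · have hi := congrFun (eq_single_of_rootCombination_eq_smul hα.indep h) i
      rw [Pi.single_eq_of_ne hij] at hi ⊢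
      exact (Nat.add_eq_zero_iff.1 hi).1
  rw [hc, rootCombination_single] at hβ ⊢
  exact hα.eq_of_isPosRoot_smul hβ

lemma IsBase.isPosRoot_sub_smul (hα : IsBase H α) {j : Fin r} {t : H} (ht : IsCoroot H (α j) t)
    {β : Module.Dual ℂ H} (hβ : IsPosRoot H α β) (hβj : β ≠ α j) :
    IsPosRoot H α (β - β t • α j) := by
  refine (hα.isPosRoot_or_isPosRoot_neg (hβ.1.sub_smul (hα.isRoot j) ht)).resolve_right fun h => ?_
  obtain ⟨d, -, hd⟩ := h.exists_rootCombination
  refine hβj (hα.eq_of_add_rootCombination_eq_smul hβ (d := d) (z := β t) ?_)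
  rw [← hd, neg_sub, add_sub_cancel]

/-- The reflection in `α j` negates the values `β t` and permutes the positive roots `β ≠ α j`. -/
lemma IsBase.sum_positiveRoots_apply (hα : IsBase H α) {j : Fin r} {t : H}
    (ht : IsCoroot H (α j) t) : ∑ β ∈ positiveRoots α, β t = 2 := by
  rw [← Finset.add_sum_erase (positiveRoots α) _ (mem_positiveRoots.2 (hα.isPosRoot j)), ht.1,
    Finset.sum_involution (fun β _ => β - β t • α j), add_zero]
  · intro β _
    rw [LinearMap.sub_apply, LinearMap.smul_apply, ht.1, smul_eq_mul]
    ring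
  · exact fun β _ hβ h => hβ ((smul_eq_zero.1 (sub_eq_self.1 h)).resolve_right (hα.isRoot j).1)
  · intro β hβ
    rw [Finset.mem_erase, mem_positiveRoots] at hβ ⊢
    refine ⟨fun h => ?_, hα.isPosRoot_sub_smul ht hβ.2 hβ.1⟩
    have hβz : β = (1 + β t) • α j := by rw [add_smul, one_smul, ← sub_eq_iff_eq_add, h]
    have hpos : IsPosRoot H α ((1 + β t) • α j) := hβz ▸ hβ.2
    exact hβ.1 (hβz.trans (hα.eq_of_isPosRoot_smul hpos))
  · intro β _
    rw [LinearMap.sub_apply, LinearMap.smul_apply, ht.1, smul_eq_mul, sub_sub, ← add_smul]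
    ring_nf
    rw [zero_smul, sub_zero]

lemma casimirScalar_sub_casimirScalar (μ q : Module.Dual ℂ H) :
    casimirScalar α μ - casimirScalar α (μ - q) =
      (μ + (μ - q) + ∑ β ∈ positiveRoots α, β) (killingDual H q) := by
  simp only [casimirScalar, map_sub, LinearMap.sub_apply, LinearMap.add_apply,
    LinearMap.sum_apply, Finset.sum_sub_distrib]
  rw [apply_killingDual_comm q μ, Finset.sum_congr rfl fun β _ => apply_killingDual_comm q β]
  ring

lemma IsBase.eq_zero_of_casimirScalar_eq (hα : IsBase H α) {hc : Fin r → H}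
    (hco : ∀ j, IsCoroot H (α j) (hc j)) {μ : Module.Dual ℂ H} {c : Fin r → ℕ}
    (hμ : IsDomInt hc μ) (hμc : IsDomInt hc (μ - rootCombination α c))
    (h : casimirScalar α (μ - rootCombination α c) = casimirScalar α μ) : c = 0 := by
  choose m hm using hμ
  choose n hn using hμc
  choose k hk0 hk using fun j => (hco j).exists_killingDual_eq_smul (hα.isRoot j)
  have hpos (j : Fin r) : 0 < k j * ((m j : ℝ) + n j + 2) := mul_pos (hk0 j) (by positivity)
  have hdiff := casimirScalar_sub_casimirScalar (α := α) μ (rootCombination α c)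
  have hsum : ∑ j, (c j : ℝ) * (k j * ((m j : ℝ) + n j + 2)) = 0 := by
    rw [h, sub_self, rootCombination_apply c, map_sum, map_sum, ← rootCombination_apply c] at hdiff
    rw [← Complex.ofReal_eq_zero, hdiff]
    push_cast
    refine Finset.sum_congr rfl fun j _ => ?_
    rw [map_smul, map_smul, hk, map_smul, LinearMap.add_apply, LinearMap.add_apply,
      LinearMap.sum_apply, hα.sum_positiveRoots_apply (hco j), hm, hn, smul_eq_mul, smul_eq_mul]
  rw [Finset.sum_eq_zero_iff_of_nonneg
    fun j _ => mul_nonneg (Nat.cast_nonneg _) (hpos j).le] at hsum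
  ext j
  exact_mod_cast (mul_eq_zero.1 (hsum j (Finset.mem_univ j))).resolve_right (hpos j).ne'

variable {X : Type*} [AddCommGroup X] [Module ℂ X] [LieRingModule L X] [LieModule ℂ L X]

/-- A singular vector of a proper nonzero submodule would have dominant weight `ν < μ`, and the
Casimir scalar is strictly monotone on dominant weights. -/
lemma IsHighestWeightGenerator.isIrreducible (hα : IsBase H α) {hc : Fin r → H}
    (hco : ∀ j, IsCoroot H (α j) (hc j)) {μ : Module.Dual ℂ H} {v : X}
    (hv : IsHighestWeightGenerator α μ v) (hv0 : v ≠ 0) (hint : IsIntegrableVector α v) :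
    LieModule.IsIrreducible ℂ L X := by
  have : Nontrivial X := ⟨v, 0, hv0⟩
  refine LieModule.IsIrreducible.mk fun N hN => ?_
  obtain ⟨c, s, hsN, hs0, hs⟩ := hv.exists_isSingularVector hα hN
  have hc0 : c = 0 := hα.eq_zero_of_casimirScalar_eq hco (hv.isDomInt hα hco hv0 hint)
    (hs.isDomInt hα hco hs0 (hint.of_lieSpan_eq_top hα hv.lieSpan_eq_top s))
    (hv.casimirScalar_eq hα hs hs0)
  refine hv.eq_top_of_mem_weightSpace hα hsN ?_ hs0
  simpa only [hc0, map_zero, sub_zero] using hs.mem_weightSpace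

end Irreducibility

section Product

variable {R L M N : Type*} [CommRing R] [LieRing L]
  [AddCommGroup M] [Module R M] [LieRingModule L M]
  [AddCommGroup N] [Module R N] [LieRingModule L N]

lemma lieSpan_singleton_subtype_eq_top (m : M) :
    LieSubmodule.lieSpan R L
      {(⟨m, LieSubmodule.subset_lieSpan rfl⟩ : LieSubmodule.lieSpan R L {m})} = ⊤ := by
  set P := LieSubmodule.lieSpan R L {(⟨m, _⟩ : LieSubmodule.lieSpan R L {m})}
  have hle : LieSubmodule.lieSpan R L {m} ≤ P.map (LieSubmodule.lieSpan R L {m}).incl :=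
    LieSubmodule.lieSpan_le.2 <| Set.singleton_subset_iff.2 <|
      (LieSubmodule.mem_map _).2 ⟨_, LieSubmodule.subset_lieSpan rfl, rfl⟩
  refine eq_top_iff.2 fun x _ => ?_
  obtain ⟨y, hy, hyx⟩ := (LieSubmodule.mem_map _).1 (hle x.2)
  rwa [← Subtype.ext hyx]

/-- The direct product of two representations, with the componentwise action. -/
instance prodLieRingModule : LieRingModule L (M × N) where
  bracket x m := (⁅x, m.1⁆, ⁅x, m.2⁆)
  add_lie x y m := Prod.ext (add_lie x y m.1) (add_lie x y m.2)
  lie_add x m n := Prod.ext (lie_add x m.1 n.1) (lie_add x m.2 n.2)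
  leibniz_lie x y m := Prod.ext (leibniz_lie x y m.1) (leibniz_lie x y m.2)

variable [LieAlgebra R L] [LieModule R L M] [LieModule R L N]

instance prodLieModule : LieModule R L (M × N) where
  smul_lie t x m := Prod.ext (smul_lie t x m.1) (smul_lie t x m.2)
  lie_smul t x m := Prod.ext (lie_smul t x m.1) (lie_smul t x m.2)

variable (R L M N) in
/-- The first projection, as a morphism of Lie modules. -/
def fstLieModuleHom : M × N →ₗ⁅R,L⁆ M where
  toLinearMap := LinearMap.fst R M N
  map_lie' := rfl

variable (R L M N) in
/-- The second projection, as a morphism of Lie modules. -/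
def sndLieModuleHom : M × N →ₗ⁅R,L⁆ N where
  toLinearMap := LinearMap.snd R M N
  map_lie' := rfl

lemma toEnd_prod_pow_apply (x : L) (k : ℕ) (m : M × N) :
    (toEnd R L (M × N) x ^ k) m = ((toEnd R L M x ^ k) m.1, (toEnd R L N x ^ k) m.2) :=
  Prod.ext (toEnd_pow_apply_map (fstLieModuleHom R L M N) k x m).symm
    (toEnd_pow_apply_map (sndLieModuleHom R L M N) k x m).symm

end Product

section Extension

variable {L : Type} [LieRing L] [LieAlgebra ℂ L] {H : LieSubalgebra ℂ L} [H.IsCartanSubalgebra]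
  {r : ℕ} {α : Fin r → Module.Dual ℂ H} {μ : Module.Dual ℂ H}
  {X Y : Type*} [AddCommGroup X] [Module ℂ X] [LieRingModule L X] [LieModule ℂ L X]
  [AddCommGroup Y] [Module ℂ Y] [LieRingModule L Y] [LieModule ℂ L Y]

lemma IsSingularVector.prodMk {x : X} {y : Y} (hx : IsSingularVector α μ x)
    (hy : IsSingularVector α μ y) : IsSingularVector α μ (x, y) where
  mem_weightSpace := (LieModule.mem_weightSpace _ _).2 fun h =>
    Prod.ext (hx.lie_eq_smul h) (hy.lie_eq_smul h)
  lie_eq_zero χ hχ e he := Prod.ext (hx.lie_eq_zero χ hχ e he) (hy.lie_eq_zero χ hχ e he)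

lemma IsIntegrableVector.prodMk {x : X} {y : Y} (hx : IsIntegrableVector α x)
    (hy : IsIntegrableVector α y) : IsIntegrableVector α (x, y) := by
  intro j f hf
  obtain ⟨m, hm⟩ := hx j f hf
  obtain ⟨n, hn⟩ := hy j f hf
  refine ⟨m + n, ?_⟩
  rw [toEnd_prod_pow_apply, Module.End.pow_map_zero_of_le (m.le_add_right n) hm,
    Module.End.pow_map_zero_of_le (n.le_add_left m) hn, Prod.mk_zero_zero]

lemma IsSingularVector.of_map_injective {φ : X →ₗ⁅ℂ,L⁆ Y} (hφ : Function.Injective φ) {x : X}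
    (hx : IsSingularVector α μ (φ x)) : IsSingularVector α μ x where
  mem_weightSpace := (LieModule.mem_weightSpace _ _).2 fun h => hφ <| by
    rw [LieSubalgebra.coe_bracket_of_module, φ.map_lie, hx.lie_eq_smul, map_smul]
  lie_eq_zero χ hχ e he := hφ <| by rw [φ.map_lie, hx.lie_eq_zero χ hχ e he, map_zero]

lemma IsIntegrableVector.of_map_injective {φ : X →ₗ⁅ℂ,L⁆ Y} (hφ : Function.Injective φ) {x : X}
    (hx : IsIntegrableVector α (φ x)) : IsIntegrableVector α x := by
  intro j f hf
  obtain ⟨n, hn⟩ := hx j f hf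
  exact ⟨n, hφ <| by rw [← toEnd_pow_apply_map, hn, map_zero]⟩

variable [FiniteDimensional ℂ L] [LieAlgebra.IsKilling ℂ L]

/-- The submodule of `X × Y` generated by `(x, y)` is irreducible, so it projects isomorphically
to `Y`: it is the graph of the required morphism. -/
lemma IsHighestWeightGenerator.exists_lieModuleHom_apply_eq (hα : IsBase H α) {hc : Fin r → H}
    (hco : ∀ j, IsCoroot H (α j) (hc j)) {y : Y} (hy : IsHighestWeightGenerator α μ y)
    (hy0 : y ≠ 0) (hyint : IsIntegrableVector α y) {x : X} (hx : IsSingularVector α μ x)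
    (hxint : IsIntegrableVector α x) : ∃ g : Y →ₗ⁅ℂ,L⁆ X, g y = x := by
  let D : LieSubmodule ℂ L (X × Y) := LieSubmodule.lieSpan ℂ L {(x, y)}
  let d : D := ⟨(x, y), LieSubmodule.subset_lieSpan rfl⟩
  have hd : IsHighestWeightGenerator α μ d :=
    ⟨(hx.prodMk hy.toIsSingularVector).of_map_injective D.injective_incl,
      lieSpan_singleton_subtype_eq_top _⟩
  have hd0 : d ≠ 0 := fun h => hy0 (congrArg (fun q : D => (q : X × Y).2) h)
  have : LieModule.IsIrreducible ℂ L D :=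
    hd.isIrreducible hα hco hd0 ((hxint.prodMk hyint).of_map_injective D.injective_incl)
  let p : D →ₗ⁅ℂ,L⁆ Y := (sndLieModuleHom ℂ L X Y).comp D.incl
  have hinj : Function.Injective p := by
    refine (LieModuleHom.ker_eq_bot p).1 ((eq_bot_or_eq_top _).resolve_right fun h => hy0 ?_)
    exact p.mem_ker.1 (h ▸ LieSubmodule.mem_top d)
  have hsurj : Function.Surjective p := by
    rw [← LieModuleHom.range_eq_top, eq_top_iff, ← hy.lieSpan_eq_top]
    exact LieSubmodule.lieSpan_le.2 (Set.singleton_subset_iff.2 (p.mem_range y |>.2 ⟨d, rfl⟩))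
  let E : D ≃ₗ⁅ℂ,L⁆ Y := { LinearEquiv.ofBijective (p : D →ₗ[ℂ] Y) ⟨hinj, hsurj⟩, p with }
  refine ⟨((fstLieModuleHom ℂ L X Y).comp D.incl).comp (E.symm : Y →ₗ⁅ℂ,L⁆ D), ?_⟩
  have hEy : E.symm y = d := E.symm_apply_apply d
  exact congrArg (fun q : D => (q : X × Y).1) hEy

end Extension

section Verma

attribute [local instance] LieRing.ofAssociativeRing

variable {L : Type} [LieRing L] [LieAlgebra ℂ L] {H : LieSubalgebra ℂ L} [H.IsCartanSubalgebra]
  {r : ℕ} {α : Fin r → Module.Dual ℂ H}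

/-- The sum of the root spaces `𝔤_χ`, including `𝔤_0 = 𝔥`, for `χ` in a set of functionals closed
under addition. -/
noncomputable def rootSubalgebra (S : AddSubsemigroup (Module.Dual ℂ H)) : LieSubalgebra ℂ L where
  __ := ⨆ χ ∈ S, (rootSpace H χ).toSubmodule
  lie_mem' := by
    set P : Submodule ℂ L := ⨆ χ ∈ S, (rootSpace H χ).toSubmodule
    intro x y hx hy
    change x ∈ P at hx
    change y ∈ P at hy
    have hroot {χ : Module.Dual ℂ H} (hχ : χ ∈ S) {e : L} (he : e ∈ rootSpace H χ) :
        P ≤ P.comap (toEnd ℂ L L e) :=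
      iSup₂_le fun ψ hψ f hf => Submodule.mem_iSup_of_mem (χ + ψ) <|
        Submodule.mem_iSup_of_mem (S.add_mem hχ hψ) <|
          lie_mem_genWeightSpace_of_mem_genWeightSpace he hf
    have hle : P ≤ P.comap ((toEnd ℂ L L : L →ₗ[ℂ] Module.End ℂ L).flip y) :=
      iSup₂_le fun χ hχ e he => hroot hχ he hy
    exact hle hx

lemma mem_rootSubalgebra_of_mem_rootSpace {S : AddSubsemigroup (Module.Dual ℂ H)}
    {χ : Module.Dual ℂ H} (hχ : χ ∈ S) {e : L} (he : e ∈ rootSpace H χ) : e ∈ rootSubalgebra S :=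
  Submodule.mem_iSup_of_mem χ (Submodule.mem_iSup_of_mem hχ he)

lemma rootSubalgebra_le {S : AddSubsemigroup (Module.Dual ℂ H)} {P : Submodule ℂ L}
    (h : ∀ χ ∈ S, ∀ e ∈ rootSpace H χ, e ∈ P) : (rootSubalgebra S).toSubmodule ≤ P :=
  iSup₂_le h

lemma disjoint_rootSubalgebra {S T : AddSubsemigroup (Module.Dual ℂ H)}
    (hST : Disjoint (S : Set (Module.Dual ℂ H)) T) :
    Disjoint (rootSubalgebra S).toSubmodule (rootSubalgebra T).toSubmodule :=
  ((LieSubmodule.iSupIndep_toSubmodule.2 (iSupIndep_genWeightSpace ℂ H L)).comp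
    DFunLike.coe_injective).disjoint_biSup_biSup hST

/-- The subalgebra `𝔫⁻`, as the sum of the root spaces of weights `-c₁ α₁ - ⋯ - c_r α_r ≠ 0`. -/
noncomputable def negativeSubalgebra (α : Fin r → Module.Dual ℂ H) : LieSubalgebra ℂ L :=
  rootSubalgebra
    { carrier := {χ | ∃ c, c ≠ 0 ∧ χ = -rootCombination α c}
      add_mem' := by
        rintro _ _ ⟨c, hc, rfl⟩ ⟨d, -, rfl⟩
        exact ⟨c + d, by simp [hc], by rw [map_add, neg_add]⟩ }

/-- The Borel subalgebra `𝔟 = 𝔥 ⊕ 𝔫⁺`, as the sum of the root spaces of weights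
`c₁ α₁ + ⋯ + c_r α_r`. -/
noncomputable def borelSubalgebra (α : Fin r → Module.Dual ℂ H) : LieSubalgebra ℂ L :=
  rootSubalgebra (AddMonoidHom.mrange (rootCombination α)).toAddSubsemigroup

lemma mem_borelSubalgebra_of_isPosRoot {χ : Module.Dual ℂ H} (hχ : IsPosRoot H α χ) {e : L}
    (he : e ∈ rootSpace H χ) : e ∈ borelSubalgebra α := by
  obtain ⟨c, -, rfl⟩ := hχ.exists_rootCombination
  refine mem_rootSubalgebra_of_mem_rootSpace ?_ he
  exact ⟨c, rfl⟩

lemma mem_negativeSubalgebra_of_isPosRoot {χ : Module.Dual ℂ H} (hχ : IsPosRoot H α χ) {f : L}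
    (hf : f ∈ rootSpace H ⇑(-χ)) : f ∈ negativeSubalgebra α := by
  obtain ⟨c, hc, rfl⟩ := hχ.exists_rootCombination
  refine mem_rootSubalgebra_of_mem_rootSpace ?_ hf
  exact ⟨c, hc, rfl⟩

variable [FiniteDimensional ℂ L]

lemma coe_mem_borelSubalgebra (h : H) : (h : L) ∈ borelSubalgebra α := by
  refine mem_rootSubalgebra_of_mem_rootSpace ?_ (mem_rootSpace_zero h)
  exact ⟨0, map_zero _⟩

variable [LieAlgebra.IsKilling ℂ L]

lemma IsBase.isCompl_negativeSubalgebra_borelSubalgebra (hα : IsBase H α) :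
    IsCompl (negativeSubalgebra α).toSubmodule (borelSubalgebra α).toSubmodule where
  disjoint := by
    refine disjoint_rootSubalgebra (Set.disjoint_left.2 ?_)
    rintro _ ⟨c, hc, rfl⟩ ⟨d, hd⟩
    refine hc (eq_zero_of_rootCombination_add_eq_zero hα.indep (d := d) ?_)
    rw [hd, add_neg_cancel]
  codisjoint := codisjoint_iff.2 <| hα.eq_top_of_rootSpace_le
    (fun h hh => Submodule.mem_sup_right (coe_mem_borelSubalgebra ⟨h, hh⟩))
    (fun _ hχ _ he => Submodule.mem_sup_right (mem_borelSubalgebra_of_isPosRoot hχ he))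
    (fun _ hχ _ hf => Submodule.mem_sup_left (mem_negativeSubalgebra_of_isPosRoot hχ hf))

lemma killingForm_coe_lie_eq_zero (hα : LinearIndependent ℂ α) (t : H) {x y : L}
    (hx : x ∈ borelSubalgebra α) (hy : y ∈ borelSubalgebra α) :
    killingForm ℂ L (t : L) ⁅x, y⁆ = 0 := by
  suffices h : ∀ χ ∈ AddMonoidHom.mrange (rootCombination α), ∀ e ∈ rootSpace H χ,
      ∀ ψ ∈ AddMonoidHom.mrange (rootCombination α), ∀ f ∈ rootSpace H ψ,
        killingForm ℂ L (t : L) ⁅e, f⁆ = 0 from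
    rootSubalgebra_le (P := LinearMap.ker
      ((killingForm ℂ L (t : L)) ∘ₗ (toEnd ℂ L L : L →ₗ[ℂ] Module.End ℂ L).flip y))
      (fun χ hχ e he => rootSubalgebra_le (P := LinearMap.ker
        ((killingForm ℂ L (t : L)) ∘ₗ toEnd ℂ L L e)) (h χ hχ e he) hy) hx
  rintro _ ⟨c, rfl⟩ e he _ ⟨d, rfl⟩ f hf
  rw [killingForm, ← traceForm_apply_lie_apply, mem_rootSpace_iff.1 he t, map_smul,
    LinearMap.smul_apply]
  by_cases hcd : rootCombination α c + rootCombination α d = 0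
  · rw [eq_zero_of_rootCombination_add_eq_zero hα hcd, map_zero, LinearMap.zero_apply, zero_smul]
  · rw [← killingForm, killingForm_eq_zero_of_mem_rootSpace he hf hcd, smul_zero]

/-- The character of `𝔟` extending a functional `μ` on `𝔥` by zero on `𝔫⁺`, given by the Killing
form with `t_μ`. -/
noncomputable def IsBase.borelCharacter (hα : IsBase H α) (μ : Module.Dual ℂ H) :
    LieCharacter ℂ (borelSubalgebra α) where
  __ := killingForm ℂ L (killingDual H μ) ∘ₗ (borelSubalgebra α).toSubmodule.subtype
  map_lie' {x y} := by
    refine (killingForm_coe_lie_eq_zero hα.indep (killingDual H μ) x.2 y.2).trans ?_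
    rw [LieRing.of_associative_ring_bracket, mul_comm, sub_self]

lemma IsBase.borelCharacter_coe (hα : IsBase H α) (μ : Module.Dual ℂ H) (h : H) :
    hα.borelCharacter μ ⟨h, coe_mem_borelSubalgebra h⟩ = μ h :=
  killingForm_killingDual μ h

lemma IsBase.borelCharacter_eq_zero (hα : IsBase H α) (μ : Module.Dual ℂ H) {χ : Module.Dual ℂ H}
    (hχ : IsPosRoot H α χ) {e : L} (he : e ∈ rootSpace H χ) :
    hα.borelCharacter μ ⟨e, mem_borelSubalgebra_of_isPosRoot hχ he⟩ = 0 :=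
  killingForm_eq_zero_of_mem_rootSpace (mem_rootSpace_zero _) he (by simpa using hχ.1.1)

/-- The Verma module of highest weight `μ`. -/
abbrev IsBase.VermaModule (hα : IsBase H α) (μ : Module.Dual ℂ H) : Type :=
  InducedModule hα.isCompl_negativeSubalgebra_borelSubalgebra (hα.borelCharacter μ)

/-- The canonical highest weight vector of a Verma module. -/
noncomputable def IsBase.vermaGenerator (hα : IsBase H α) (μ : Module.Dual ℂ H) :
    hα.VermaModule μ :=
  InducedModule.generator _ _

lemma IsBase.lie_vermaGenerator (hα : IsBase H α) (μ : Module.Dual ℂ H) (b : borelSubalgebra α) :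
    ⁅(b : L), hα.vermaGenerator μ⁆ = hα.borelCharacter μ b • hα.vermaGenerator μ :=
  InducedModule.lie_generator _ _ b

lemma IsBase.isHighestWeightGenerator_vermaGenerator (hα : IsBase H α) (μ : Module.Dual ℂ H) :
    IsHighestWeightGenerator α μ (hα.vermaGenerator μ) where
  mem_weightSpace := (LieModule.mem_weightSpace _ _).2 fun h =>
    hα.borelCharacter_coe μ h ▸ hα.lie_vermaGenerator μ ⟨h, coe_mem_borelSubalgebra h⟩
  lie_eq_zero _ hχ e he := by
    have hlie := hα.lie_vermaGenerator μ ⟨e, mem_borelSubalgebra_of_isPosRoot hχ he⟩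
    rwa [hα.borelCharacter_eq_zero μ hχ he, zero_smul] at hlie
  lieSpan_eq_top := by
    rw [← LieSubmodule.toSubmodule_eq_top]
    exact InducedModule.eq_top_of_generator_mem _ _ _ (LieSubmodule.subset_lieSpan rfl)
      fun _ _ _ hm => LieSubmodule.lie_mem _ hm

/-- A linear map commuting with the action of `𝔫⁻`. -/
def IsNegEquivariant (α : Fin r → Module.Dual ℂ H) {X Y : Type*} [AddCommGroup X] [Module ℂ X]
    [LieRingModule L X] [AddCommGroup Y] [Module ℂ Y] [LieRingModule L Y] (ψ : X →ₗ[ℂ] Y) : Prop :=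
  ∀ χ, IsPosRoot H α χ → ∀ f ∈ rootSpace H ⇑(-χ), ∀ x, ψ ⁅f, x⁆ = ⁅f, ψ x⁆

lemma IsBase.exists_isNegEquivariant_vermaGenerator_eq (hα : IsBase H α) (μ : Module.Dual ℂ H)
    {Y : Type*} [AddCommGroup Y] [Module ℂ Y] [LieRingModule L Y] [LieModule ℂ L Y] (y : Y) :
    ∃ ψ : hα.VermaModule μ →ₗ[ℂ] Y, IsNegEquivariant α ψ ∧ ψ (hα.vermaGenerator μ) = y := by
  obtain ⟨ψ, hψy, hψ⟩ := InducedModule.exists_linearMap_generator_eq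
    hα.isCompl_negativeSubalgebra_borelSubalgebra (hα.borelCharacter μ) y
  exact ⟨ψ, fun _ hχ f hf => hψ f (mem_negativeSubalgebra_of_isPosRoot hχ hf), hψy⟩

end Verma

section SerreQuotient

variable {L : Type} [LieRing L] [LieAlgebra ℂ L] {H : LieSubalgebra ℂ L} [H.IsCartanSubalgebra]
  {r : ℕ} {α : Fin r → Module.Dual ℂ H} {μ : Module.Dual ℂ H}
  {X Y : Type*} [AddCommGroup X] [Module ℂ X] [LieRingModule L X]
  [AddCommGroup Y] [Module ℂ Y] [LieRingModule L Y]

lemma IsNegEquivariant.comp {Z : Type*} [AddCommGroup Z] [Module ℂ Z] [LieRingModule L Z]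
    {ψ : Y →ₗ[ℂ] Z} (hψ : IsNegEquivariant α ψ) (φ : X →ₗ⁅ℂ,L⁆ Y) :
    IsNegEquivariant α (ψ ∘ₗ (φ : X →ₗ[ℂ] Y)) := fun χ hχ f hf x =>
  (congrArg ψ (φ.map_lie f x)).trans (hψ χ hχ f hf (φ x))

variable [LieModule ℂ L X]

lemma IsNegEquivariant.eq_zero_of_mem_lieSpan [FiniteDimensional ℂ L] [LieAlgebra.IsKilling ℂ L]
    (hα : IsBase H α) {ψ : X →ₗ[ℂ] Y} (hψ : IsNegEquivariant α ψ) {s : X}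
    (hs : IsSingularVector α μ s) (hψs : ψ s = 0) {x : X}
    (hx : x ∈ LieSubmodule.lieSpan ℂ L {s}) : ψ x = 0 := by
  let D : LieSubmodule ℂ L X := LieSubmodule.lieSpan ℂ L {s}
  let d : D := ⟨s, LieSubmodule.subset_lieSpan rfl⟩
  have hd : IsHighestWeightGenerator α μ d :=
    ⟨IsSingularVector.of_map_injective (φ := D.incl) D.injective_incl hs,
      lieSpan_singleton_subtype_eq_top s⟩
  have hker : LinearMap.ker (ψ ∘ₗ (D.incl : D →ₗ[ℂ] X)) = ⊤ := by
    refine hd.eq_top_of_stable hα hψs fun χ hχ f hf y hy => ?_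
    rw [LinearMap.mem_ker] at hy ⊢
    rw [hψ.comp D.incl χ hχ f hf, hy, lie_zero]
  exact LinearMap.congr_fun (LinearMap.ker_eq_top.1 hker) ⟨x, hx⟩

variable [LieModule ℂ L Y]

lemma IsSingularVector.map {v : X} (hv : IsSingularVector α μ v) (φ : X →ₗ⁅ℂ,L⁆ Y) :
    IsSingularVector α μ (φ v) where
  mem_weightSpace := (LieModule.mem_weightSpace _ _).2 fun h => by
    rw [LieSubalgebra.coe_bracket_of_module, ← φ.map_lie, hv.lie_eq_smul, map_smul]
  lie_eq_zero χ hχ e he := by rw [← φ.map_lie, hv.lie_eq_zero χ hχ e he, map_zero]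

lemma IsNegEquivariant.map_toEnd_pow {ψ : X →ₗ[ℂ] Y} (hψ : IsNegEquivariant α ψ)
    {χ : Module.Dual ℂ H} (hχ : IsPosRoot H α χ) {f : L} (hf : f ∈ rootSpace H ⇑(-χ)) (n : ℕ)
    (x : X) : ψ ((toEnd ℂ L X f ^ n) x) = (toEnd ℂ L Y f ^ n) (ψ x) := by
  induction n with
  | zero => rfl
  | succ n ih =>
    rw [pow_succ', pow_succ', Module.End.mul_apply, Module.End.mul_apply, toEnd_apply_apply,
      toEnd_apply_apply, hψ χ hχ f hf, ih]

/-- The submodule generated by the Serre vectors `f ^ (m j + 1) v`, for `f` in the root space of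
`-α j`; it is applied with `m j = ⟨μ, α_j∨⟩` and `v` of weight `μ`. -/
noncomputable def serreSubmodule (α : Fin r → Module.Dual ℂ H) (m : Fin r → ℕ) (v : X) :
    LieSubmodule ℂ L X :=
  ⨆ (j) (f ∈ rootSpace H ⇑(-α j)), LieSubmodule.lieSpan ℂ L {(toEnd ℂ L X f ^ (m j + 1)) v}

lemma isIntegrableVector_mk_serreSubmodule (m : Fin r → ℕ) (v : X) :
    IsIntegrableVector α (LieSubmodule.Quotient.mk' (serreSubmodule α m v) v) := by
  intro j f hf
  refine ⟨m j + 1, ?_⟩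
  rw [toEnd_pow_apply_map, ← LieModuleHom.mem_ker, LieSubmodule.Quotient.mk'_ker]
  exact LieSubmodule.mem_iSup_of_mem j <| LieSubmodule.mem_iSup_of_mem f <|
    LieSubmodule.mem_iSup_of_mem hf <| LieSubmodule.subset_lieSpan rfl

variable [FiniteDimensional ℂ L] [LieAlgebra.IsKilling ℂ L]

lemma toEnd_pow_mem_weightSpace {χ : Module.Dual ℂ H} {f : L} (hf : f ∈ rootSpace H ⇑(-χ)) {v : X}
    (hv : v ∈ weightSpace X μ) (n : ℕ) :
    (toEnd ℂ L X f ^ n) v ∈ weightSpace X ⇑(μ - (n : ℂ) • χ) := by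
  induction n with
  | zero => simpa using hv
  | succ n ih =>
    have hweight : μ - ((n + 1 : ℕ) : ℂ) • χ = -χ + (μ - (n : ℂ) • χ) := by
      rw [Nat.cast_succ, add_smul, one_smul]
      abel
    rw [pow_succ', Module.End.mul_apply, hweight]
    exact lie_mem_weightSpace hf ih

lemma IsSingularVector.lie_toEnd_pow_succ_eq_zero (hα : IsBase H α) {j : Fin r} {t : H}
    (ht : IsCoroot H (α j) t) {v : X} (hv : IsSingularVector α μ v) {n : ℕ} (hn : μ t = n)
    {e f : L} (he : e ∈ rootSpace H (α j)) (hf : f ∈ rootSpace H ⇑(-α j)) :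
    ⁅e, (toEnd ℂ L X f ^ (n + 1)) v⁆ = 0 := by
  obtain ⟨e₀, he₀, f₀, hf₀, hef⟩ := ht.exists_isSl2Triple
  obtain ⟨a, rfl⟩ := (hα.isRoot j).exists_eq_smul he₀ hef.e_ne_zero he
  obtain ⟨b, rfl⟩ := (hα.isRoot j).neg.exists_eq_smul hf₀ hef.f_ne_zero hf
  rcases eq_or_ne v 0 with rfl | hv0
  · rw [map_zero, lie_zero]
  have hprim : hef.HasPrimitiveVectorWith v (μ t) :=
    ⟨hv0, hv.lie_eq_smul t, hv.lie_eq_zero _ (hα.isPosRoot j) e₀ he₀⟩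
  rw [map_smul, smul_pow, LinearMap.smul_apply, smul_lie, lie_smul,
    hprim.lie_e_pow_succ_toEnd_f n, hn, sub_self, mul_zero, zero_smul, smul_zero, smul_zero]

lemma IsHighestWeightGenerator.isSingularVector_toEnd_pow_succ (hα : IsBase H α) {j : Fin r} {t : H}
    (ht : IsCoroot H (α j) t) {v : X} (hv : IsHighestWeightGenerator α μ v) {n : ℕ}
    (hn : μ t = n) {f : L} (hf : f ∈ rootSpace H ⇑(-α j)) :
    IsSingularVector α (μ - ((n + 1 : ℕ) : ℂ) • α j) ((toEnd ℂ L X f ^ (n + 1)) v) := by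
  have hpow := toEnd_pow_mem_weightSpace hf hv.mem_weightSpace (n + 1)
  refine ⟨hpow, fun β hβ e he => ?_⟩
  by_cases hβj : β = α j
  · exact hv.lie_toEnd_pow_succ_eq_zero hα ht hn (hβj ▸ he) hf
  by_contra hne
  -- `β + μ - (n + 1) α_j` is a weight `μ - c`, so `β` is a multiple of `α_j`
  obtain ⟨c, hc⟩ := hv.exists_weight_eq hα (lie_mem_weightSpace he hpow) hne
  refine hβj (hα.eq_of_add_rootCombination_eq_smul hβ (d := c) (z := ((n + 1 : ℕ) : ℂ)) ?_)
  rw [← sub_eq_zero] at hc ⊢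
  rw [← hc]
  abel

lemma IsNegEquivariant.serreSubmodule_le_ker (hα : IsBase H α) {hc : Fin r → H}
    (hco : ∀ j, IsCoroot H (α j) (hc j)) {m : Fin r → ℕ} (hm : ∀ j, μ (hc j) = m j) {v : X}
    (hv : IsHighestWeightGenerator α μ v) {ψ : X →ₗ[ℂ] Y} (hψ : IsNegEquivariant α ψ)
    (hψv : ∀ j, ∀ f ∈ rootSpace H ⇑(-α j), (toEnd ℂ L Y f ^ (m j + 1)) (ψ v) = 0) :
    (serreSubmodule α m v).toSubmodule ≤ LinearMap.ker ψ := by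
  simp only [serreSubmodule, LieSubmodule.iSup_toSubmodule]
  refine iSup_le fun j => iSup₂_le fun f hf x hx => hψ.eq_zero_of_mem_lieSpan hα
    (hv.isSingularVector_toEnd_pow_succ hα (hco j) (hm j) hf) ?_ hx
  rw [hψ.map_toEnd_pow (hα.isPosRoot j) hf, hψv j f hf]

/-- An integrable highest weight module is the quotient of the Verma module by its Serre
submodule. -/
lemma IsHighestWeightGenerator.exists_isNegEquivariant_apply_eq (hα : IsBase H α) {hc : Fin r → H}
    (hco : ∀ j, IsCoroot H (α j) (hc j)) {m : Fin r → ℕ} (hm : ∀ j, μ (hc j) = m j) {v : X}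
    (hv : IsHighestWeightGenerator α μ v) (hv0 : v ≠ 0) (hint : IsIntegrableVector α v) {y : Y}
    (hy : ∀ j, ∀ f ∈ rootSpace H ⇑(-α j), (toEnd ℂ L Y f ^ (m j + 1)) y = 0) :
    ∃ ψ : X →ₗ[ℂ] Y, IsNegEquivariant α ψ ∧ ψ v = y := by
  let w := hα.vermaGenerator μ
  have hw : IsHighestWeightGenerator α μ w := hα.isHighestWeightGenerator_vermaGenerator μ
  let π := LieSubmodule.Quotient.mk' (serreSubmodule α m w)
  obtain ⟨φ, hφv⟩ := hv.exists_lieModuleHom_apply_eq hα hco hv0 hint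
    (hw.toIsSingularVector.map π) (isIntegrableVector_mk_serreSubmodule m w)
  obtain ⟨ψ, hψ, hψw⟩ := hα.exists_isNegEquivariant_vermaGenerator_eq μ y
  let ψ' : hα.VermaModule μ ⧸ serreSubmodule α m w →ₗ[ℂ] Y :=
    (serreSubmodule α m w).toSubmodule.liftQ ψ
      (hψ.serreSubmodule_le_ker hα hco hm hw (by rwa [hψw]))
  have hψ' : IsNegEquivariant α ψ' := by
    intro χ hχ f hf q
    obtain ⟨z, rfl⟩ := LieSubmodule.Quotient.surjective_mk' _ q
    exact (congrArg ψ' (π.map_lie f z)).symm.trans (hψ χ hχ f hf z)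
  refine ⟨ψ' ∘ₗ (φ : X →ₗ[ℂ] _), hψ'.comp φ, ?_⟩
  exact (congrArg ψ' hφv).trans hψw

end SerreQuotient

section InvariantPairing

/-- A bilinear pairing `B : W × V → K` is `L`-invariant: when `B` is perfect, it identifies `W`
with the contragredient of `V`. -/
def IsInvariantPairing {K : Type*} (L : Type*) {V W : Type*} [CommRing K] [LieRing L]
    [AddCommGroup V] [Module K V] [LieRingModule L V]
    [AddCommGroup W] [Module K W] [LieRingModule L W] (B : W →ₗ[K] V →ₗ[K] K) : Prop :=
  ∀ (x : L) (w : W) (v : V), B ⁅x, w⁆ v + B w ⁅x, v⁆ = 0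

lemma IsInvariantPairing.apply_lie {K L V W : Type*} [CommRing K] [LieRing L]
    [AddCommGroup V] [Module K V] [LieRingModule L V]
    [AddCommGroup W] [Module K W] [LieRingModule L W] {B : W →ₗ[K] V →ₗ[K] K}
    (hB : IsInvariantPairing L B) (x : L) (w : W) (v : V) : B ⁅x, w⁆ v = -B w ⁅x, v⁆ :=
  eq_neg_of_add_eq_zero_left (hB x w v)

lemma IsInvariantPairing.isIrreducible {K L V W : Type*} [Field K] [LieRing L] [LieAlgebra K L]
    [AddCommGroup V] [Module K V] [LieRingModule L V] [LieModule K L V]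
    [AddCommGroup W] [Module K W] [LieRingModule L W] [LieModule K L W]
    {B : W →ₗ[K] V →ₗ[K] K} [B.IsPerfPair] (hB : IsInvariantPairing L B)
    [LieModule.IsIrreducible K L V] : LieModule.IsIrreducible K L W := by
  have : Nontrivial V := (LieSubmodule.nontrivial_iff K L V).1 inferInstance
  have : Nontrivial W := B.toPerfPair.nontrivial
  refine .mk fun N hN => by_contra fun hNtop => hN ?_
  let A : LieSubmodule K L V :=
    { (N.toSubmodule.map B).dualCoannihilator with
      lie_mem := fun {x v} hv => by
        change v ∈ (N.toSubmodule.map B).dualCoannihilator at hv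
        change ⁅x, v⁆ ∈ (N.toSubmodule.map B).dualCoannihilator
        rw [Submodule.mem_dualCoannihilator] at hv ⊢
        rintro _ ⟨w, hw, rfl⟩
        rw [← neg_eq_zero, ← hB.apply_lie, hv _ ⟨_, N.lie_mem hw, rfl⟩] }
  have mem_A {v : V} : v ∈ A ↔ ∀ w ∈ N, B w v = 0 := by
    change v ∈ (N.toSubmodule.map B).dualCoannihilator ↔ _
    simp [Submodule.mem_dualCoannihilator]
  obtain ⟨φ, hφ0, hφN⟩ := Submodule.exists_le_ker_of_lt_top N.toSubmodule
    (lt_top_iff_ne_top.2 fun h => hNtop ((LieSubmodule.toSubmodule_eq_top N).1 h))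
  obtain ⟨v, rfl⟩ := B.flip.toPerfPair.surjective φ
  rcases eq_bot_or_eq_top A with hA | hA
  · have hv : v ∈ A := mem_A.2 fun w hw => hφN hw
    rw [hA, LieSubmodule.mem_bot] at hv
    exact absurd (by rw [hv, map_zero]) hφ0
  · refine N.eq_bot_iff.2 fun w hw => B.toPerfPair.injective ?_
    ext v
    rw [map_zero, LinearMap.zero_apply]
    exact mem_A.1 (hA ▸ LieSubmodule.mem_top v) w hw

section TensorHom

variable {K L V W : Type*} [CommRing K] [LieRing L] [LieAlgebra K L]
  [AddCommGroup V] [Module K V] [Module.Free K V] [Module.Finite K V]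
  [AddCommGroup W] [Module K W] [Module.Free K W] [Module.Finite K W]

/-- The isomorphism `M ⊗ V ⊗ W ≃ Hom(W, Hom(V, M))` attached to a perfect pairing of `W`
and `V`. -/
noncomputable def tensorEquivHom (M : Type*) [AddCommGroup M] [Module K M] (B : W →ₗ[K] V →ₗ[K] K)
    [B.IsPerfPair] : (M ⊗[K] (V ⊗[K] W)) ≃ₗ[K] (W →ₗ[K] V →ₗ[K] M) :=
  TensorProduct.comm K M (V ⊗[K] W) ≪≫ₗ TensorProduct.assoc K V W M ≪≫ₗ
    TensorProduct.congr B.flip.toPerfPair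
      (TensorProduct.congr B.toPerfPair (LinearEquiv.refl K M) ≪≫ₗ dualTensorHomEquiv K V M) ≪≫ₗ
    dualTensorHomEquiv K W (V →ₗ[K] M)

variable {M : Type*} [AddCommGroup M] [Module K M]

lemma tensorEquivHom_tmul (B : W →ₗ[K] V →ₗ[K] K) [B.IsPerfPair] (m : M) (v v' : V) (w w' : W) :
    tensorEquivHom M B (m ⊗ₜ (v ⊗ₜ w)) w' v' = B w' v • B w v' • m :=
  rfl

variable [LieRingModule L M] [LieModule K L M] [LieRingModule L V] [LieModule K L V]
  [LieRingModule L W] [LieModule K L W]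

lemma IsInvariantPairing.tensorEquivHom_lie {B : W →ₗ[K] V →ₗ[K] K} [B.IsPerfPair]
    (hB : IsInvariantPairing L B) (x : L) (t : M ⊗[K] (V ⊗[K] W)) :
    tensorEquivHom M B ⁅x, t⁆ = ⁅x, tensorEquivHom M B t⁆ := by
  induction t using TensorProduct.induction_on with
  | zero => rw [lie_zero, map_zero, lie_zero]
  | add s t hs ht => rw [lie_add, map_add, hs, ht, map_add, lie_add]
  | tmul m s =>
    induction s using TensorProduct.induction_on with
    | zero => rw [TensorProduct.tmul_zero, lie_zero, map_zero, lie_zero]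
    | add s t hs ht => rw [TensorProduct.tmul_add, lie_add, map_add, hs, ht, map_add, lie_add]
    | tmul v w =>
      ext w' v'
      simp only [TensorProduct.LieModule.lie_tmul_right, TensorProduct.tmul_add, map_add,
        LinearMap.add_apply, LieHom.lie_apply, LinearMap.sub_apply, tensorEquivHom_tmul,
        hB.apply_lie, lie_smul]
      module

variable (M) in
/-- The invariants of `M ⊗ V ⊗ W` are the equivariant maps from `W` to `Hom(V, M)`. -/
noncomputable def IsInvariantPairing.invariantsEquiv {B : W →ₗ[K] V →ₗ[K] K} [B.IsPerfPair]
    (hB : IsInvariantPairing L B) :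
    maxTrivSubmodule K L (M ⊗[K] (V ⊗[K] W)) ≃ₗ[K] (W →ₗ⁅K,L⁆ V →ₗ[K] M) :=
  let E : (M ⊗[K] (V ⊗[K] W)) ≃ₗ⁅K,L⁆ (W →ₗ[K] V →ₗ[K] M) :=
    { tensorEquivHom M B with map_lie' := fun {x t} => hB.tensorEquivHom_lie x t }
  (maxTrivEquiv E).toLinearEquiv ≪≫ₗ maxTrivLinearMapEquivLieModuleHom

end TensorHom

end InvariantPairing

section Count

variable {L : Type} [LieRing L] [LieAlgebra ℂ L] {H : LieSubalgebra ℂ L} {r : ℕ}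
  {α : Fin r → Module.Dual ℂ H}

lemma mem_dualCoannihilator_span_image {s : Set (Fin r)} {h : H} :
    h ∈ (Submodule.span ℂ (α '' s)).dualCoannihilator ↔ ∀ j ∈ s, α j h = 0 := by
  rw [← SetLike.mem_coe, Submodule.coe_dualCoannihilator_span]
  exact Set.forall_mem_image

variable [H.IsCartanSubalgebra] [FiniteDimensional ℂ L] [LieAlgebra.IsKilling ℂ L]

lemma IsBase.span_range_eq_top (hα : IsBase H α) : Submodule.span ℂ (Set.range α) = ⊤ := by
  have rootCombination_mem (c : Fin r → ℕ) :
      rootCombination α c ∈ Submodule.span ℂ (Set.range α) := by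
    rw [rootCombination_apply]
    exact Submodule.sum_mem _ fun j _ =>
      Submodule.smul_mem _ _ (Submodule.subset_span (Set.mem_range_self j))
  rw [eq_top_iff, ← IsKilling.span_weight_isNonZero_eq_top (K := ℂ) (L := L) (H := H),
    Submodule.span_le]
  rintro _ ⟨β, hβ, rfl⟩
  have hroot : IsRoot H (Weight.toLinear ℂ H L β) :=
    ⟨fun h => hβ (funext (LinearMap.congr_fun h)), β.genWeightSpace_ne_bot⟩
  rw [SetLike.mem_coe]
  rcases hα.pos_neg _ hroot with ⟨c, hc⟩ | ⟨c, hc⟩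
  · exact hc ▸ rootCombination_mem c
  · exact hc ▸ Submodule.neg_mem _ (rootCombination_mem c)

lemma IsBase.finrank_eq (hα : IsBase H α) : finrank ℂ H = r := by
  rw [← Subspace.dual_finrank_eq,
    finrank_eq_card_basis (Basis.mk hα.indep hα.span_range_eq_top.ge), Fintype.card_fin]

lemma IsBase.finrank_dualCoannihilator_span_image (hα : IsBase H α) (s : Set (Fin r)) :
    finrank ℂ (Submodule.span ℂ (α '' s)).dualCoannihilator =
      (Finset.univ.filter fun j => j ∉ s).card := by
  have hs : finrank ℂ (Submodule.span ℂ (α '' s)) = (Finset.univ.filter fun j => j ∈ s).card := by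
    rw [Set.image_eq_range,
      finrank_span_eq_card (b := fun j : s => α j) (hα.indep.comp _ Subtype.val_injective),
      Fintype.card_subtype]
  have hsum := Subspace.finrank_add_finrank_dualCoannihilator_eq (Submodule.span ℂ (α '' s))
  have hcard := Finset.card_filter_add_card_filter_not (s := Finset.univ) fun j => j ∈ s
  rw [Finset.card_univ, Fintype.card_fin] at hcard
  rw [hα.finrank_eq, hs] at hsum
  omega

end Count

section LinearMap

variable {L : Type} [LieRing L] [LieAlgebra ℂ L] {H : LieSubalgebra ℂ L} {μ ν : Module.Dual ℂ H}
  {X Y : Type*} [AddCommGroup X] [Module ℂ X] [LieRingModule L X] [LieModule ℂ L X]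
  [AddCommGroup Y] [Module ℂ Y] [LieRingModule L Y]

lemma IsHighestWeightGenerator.eq_zero_of_isNegEquivariant [FiniteDimensional ℂ L]
    [LieAlgebra.IsKilling ℂ L] [H.IsCartanSubalgebra] {r : ℕ} {α : Fin r → Module.Dual ℂ H}
    (hα : IsBase H α) {v : X} (hv : IsHighestWeightGenerator α μ v) {φ : X →ₗ[ℂ] Y}
    (hφ : IsNegEquivariant α φ)
    (hφv : φ v = 0) : φ = 0 := by
  refine LinearMap.ker_eq_top.1 (hv.eq_top_of_stable hα hφv fun χ hχ f hf x hx => ?_)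
  rw [LinearMap.mem_ker] at hx ⊢
  rw [hφ χ hχ f hf, hx, lie_zero]

variable [LieModule ℂ L Y]

lemma apply_mem_weightSpace {φ : X →ₗ[ℂ] Y} (hφ : ∀ h : H, ⁅(h : L), φ⁆ = ν h • φ) {x : X}
    (hx : x ∈ weightSpace X μ) : φ x ∈ weightSpace Y ⇑(ν + μ) := by
  refine (mem_weightSpace _ _).2 fun h => ?_
  have hhx : ⁅(h : L), x⁆ = μ h • x := (mem_weightSpace _ _).1 hx h
  have hφx := LinearMap.congr_fun (hφ h) x
  rw [LieHom.lie_apply, hhx, map_smul, LinearMap.smul_apply] at hφx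
  rw [LieSubalgebra.coe_bracket_of_module, LinearMap.add_apply, add_smul, ← hφx, sub_add_cancel]

variable [FiniteDimensional ℂ L] [LieAlgebra.IsKilling ℂ L] [H.IsCartanSubalgebra] {r : ℕ}
  {α : Fin r → Module.Dual ℂ H}

lemma isNegEquivariant_iff_lie_eq_zero {φ : X →ₗ[ℂ] Y} :
    IsNegEquivariant α φ ↔ ∀ χ, IsPosRoot H (-α) χ → ∀ f ∈ rootSpace H χ, ⁅f, φ⁆ = 0 := by
  constructor
  · intro h χ hχ f hf
    ext x
    rw [LieHom.lie_apply, h (-χ) (isPosRoot_neg.1 hχ) f (by rwa [neg_neg]), sub_self,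
      LinearMap.zero_apply]
  · intro h χ hχ f hf x
    have hφ := LinearMap.congr_fun (h (-χ) (isPosRoot_neg.2 (by rwa [neg_neg])) f hf) x
    rw [LieHom.lie_apply, LinearMap.zero_apply] at hφ
    exact (sub_eq_zero.1 hφ).symm

lemma IsHighestWeightGenerator.isSingularVector_of_isNegEquivariant (hα : IsBase H α) {v : X}
    (hv : IsHighestWeightGenerator α μ v) {φ : X →ₗ[ℂ] Y} (hφ : IsNegEquivariant α φ)
    (hφv : φ v ∈ weightSpace Y ν) : IsSingularVector (-α) (ν - μ) φ where
  lie_eq_zero := isNegEquivariant_iff_lie_eq_zero.1 hφ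
  mem_weightSpace := by
    refine (LieModule.mem_weightSpace _ _).2 fun h => ?_
    change ⁅(h : L), φ⁆ = (ν - μ) h • φ
    have hhφv : ⁅(h : L), φ v⁆ = ν h • φ v := (LieModule.mem_weightSpace _ _).1 hφv h
    rw [← sub_eq_zero]
    refine hv.eq_zero_of_isNegEquivariant hα (fun χ hχ f hf x => ?_) ?_
    · have hhf : ⁅(h : L), f⁆ = (-χ) h • f := mem_rootSpace_iff.1 hf h
      simp only [LinearMap.sub_apply, LieHom.lie_apply, LinearMap.smul_apply, hφ χ hχ f hf,
        leibniz_lie (h : L) f, hhf, smul_lie, map_add, map_smul, lie_sub, lie_smul]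
      abel
    · rw [LinearMap.sub_apply, LieHom.lie_apply, hhφv, hv.lie_eq_smul, map_smul,
        LinearMap.smul_apply, LinearMap.sub_apply, sub_smul, sub_self]

end LinearMap

section LowestWeight

variable {L : Type} [LieRing L] [LieAlgebra ℂ L] [FiniteDimensional ℂ L]
  [LieAlgebra.IsKilling ℂ L] {H : LieSubalgebra ℂ L} [H.IsCartanSubalgebra]
  {r : ℕ} {α : Fin r → Module.Dual ℂ H} {μ : Module.Dual ℂ H}
  {V W : Type*} [AddCommGroup V] [Module ℂ V] [LieRingModule L V] [LieModule ℂ L V]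
  [AddCommGroup W] [Module ℂ W] [LieRingModule L W] [LieModule ℂ L W]

lemma IsInvariantPairing.isSingularVector_of_strictlyLowerSpace_le_ker (hα : IsBase H α)
    {B : W →ₗ[ℂ] V →ₗ[ℂ] ℂ} (hBinj : Function.Injective B) (hB : IsInvariantPairing L B) {v : V}
    (hv : IsHighestWeightGenerator α μ v) {w : W}
    (hw : (strictlyLowerSpace α μ V).toSubmodule ≤ LinearMap.ker (B w)) :
    IsSingularVector (-α) (-μ) w where
  mem_weightSpace := by
    refine (LieModule.mem_weightSpace _ _).2 fun h => hBinj ?_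
    ext x
    obtain ⟨c, y, hy, rfl⟩ := hv.exists_smul_add hα x
    have hBy : B w y = 0 := hw hy
    have hBhy : B w ⁅(h : L), y⁆ = 0 := hw ((strictlyLowerSpace α μ V).lie_mem (x := h) hy)
    simp only [LieSubalgebra.coe_bracket_of_module, hB.apply_lie, lie_add, lie_smul,
      hv.lie_eq_smul, map_add, map_smul, smul_eq_mul, hBhy, hBy, LinearMap.neg_apply,
      LinearMap.smul_apply]
    ring
  lie_eq_zero χ hχ e he := hBinj <| by
    ext x
    have hex : ⁅e, x⁆ ∈ strictlyLowerSpace α μ V :=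
      lie_mem_strictlyLowerSpace (isPosRoot_neg.1 hχ) (by rwa [neg_neg])
        (hv.lowerSpace_eq_top hα ▸ LieSubmodule.mem_top x)
    have hBex : B w ⁅e, x⁆ = 0 := hw hex
    rw [hB.apply_lie, hBex, neg_zero, map_zero, LinearMap.zero_apply]

lemma IsInvariantPairing.exists_isHighestWeightGenerator_neg (hα : IsBase H α)
    {B : W →ₗ[ℂ] V →ₗ[ℂ] ℂ} [B.IsPerfPair] (hB : IsInvariantPairing L B)
    [LieModule.IsIrreducible ℂ L V] {v : V} (hv : IsHighestWeightGenerator α μ v) (hv0 : v ≠ 0) :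
    ∃ w : W, w ≠ 0 ∧ IsHighestWeightGenerator (-α) (-μ) w := by
  obtain ⟨φ, hφv, hφ⟩ := Submodule.exists_le_ker_of_notMem
    (p := (strictlyLowerSpace α μ V).toSubmodule)
    fun h => hv0 (eq_zero_of_mem_strictlyLowerSpace hα.indep hv.mem_weightSpace h)
  obtain ⟨w, rfl⟩ := B.toPerfPair.surjective φ
  have hw0 : w ≠ 0 := by
    rintro rfl
    exact hφv (by rw [map_zero, LinearMap.zero_apply])
  have : LieModule.IsIrreducible ℂ L W := hB.isIrreducible
  exact ⟨w, hw0, IsSingularVector.isHighestWeightGenerator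
    (hB.isSingularVector_of_strictlyLowerSpace_le_ker hα B.toPerfPair.injective hv hφ) hw0⟩

end LowestWeight

section Evaluation

variable {L : Type} [LieRing L] [LieAlgebra ℂ L] {H : LieSubalgebra ℂ L} [H.IsCartanSubalgebra]
  {r : ℕ} {α : Fin r → Module.Dual ℂ H} {μ ν : Module.Dual ℂ H}
  {V W : Type*} [AddCommGroup V] [Module ℂ V] [LieRingModule L V] [LieModule ℂ L V]
  [AddCommGroup W] [Module ℂ W] [LieRingModule L W] [LieModule ℂ L W]

/-- Evaluation `Θ ↦ Θ w v` of equivariant maps `W → Hom(V, Y)`; it is used for `v` a highest and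
`w` a lowest weight vector. -/
def homEval {Y : Type*} [AddCommGroup Y] [Module ℂ Y] [LieRingModule L Y] [LieModule ℂ L Y]
    (w : W) (v : V) : (W →ₗ⁅ℂ,L⁆ V →ₗ[ℂ] Y) →ₗ[ℂ] Y where
  toFun Θ := Θ w v
  map_add' _ _ := rfl
  map_smul' _ _ := rfl

variable [FiniteDimensional ℂ L] [LieAlgebra.IsKilling ℂ L]

lemma homEval_injective (hα : IsBase H α) {Y : Type*} [AddCommGroup Y] [Module ℂ Y]
    [LieRingModule L Y] [LieModule ℂ L Y] {v : V} (hv : IsHighestWeightGenerator α μ v) {w : W}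
    (hw : IsHighestWeightGenerator (-α) ν w) :
    Function.Injective (homEval (L := L) (Y := Y) w v) := by
  refine (injective_iff_map_eq_zero _).2 fun Θ hΘ => ?_
  have hΘw : Θ w = 0 := hv.eq_zero_of_isNegEquivariant hα
    (isNegEquivariant_iff_lie_eq_zero.2 (hw.toIsSingularVector.map Θ).lie_eq_zero) hΘ
  have hker : Θ.ker = ⊤ := by
    rw [eq_top_iff, ← hw.lieSpan_eq_top]
    exact LieSubmodule.lieSpan_le.2 (Set.singleton_subset_iff.2 (LieModuleHom.mem_ker.2 hΘw))
  ext1 x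
  exact LieModuleHom.mem_ker.1 (hker ▸ LieSubmodule.mem_top x)

lemma toEnd_pow_succ_coe_eq_zero {χ : Module.Dual ℂ H} {f : L} (hf : f ∈ rootSpace H ⇑(-χ)) {h : H}
    {m : ℕ} (hm : m = 0 → χ h = 0) : (toEnd ℂ L L f ^ (m + 1)) (h : L) = 0 := by
  have hfh : ⁅f, (h : L)⁆ = χ h • f := by
    rw [← lie_skew, mem_rootSpace_iff.1 hf h, LinearMap.neg_apply, neg_smul, neg_neg]
  rw [pow_succ, Module.End.mul_apply, toEnd_apply_apply, hfh, map_smul]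
  rcases m with _ | m
  · rw [hm rfl, zero_smul]
  · rw [pow_succ, Module.End.mul_apply, toEnd_apply_apply, lie_self, map_zero, smul_zero]

/-- When `⟨μ, α_j∨⟩ = 0`, the vector `v` is killed by the root vectors for `-α j`. -/
lemma IsSingularVector.exists_coe_eq_of_isSingularVector [FiniteDimensional ℂ V] (hα : IsBase H α)
    {hc : Fin r → H} (hco : ∀ j, IsCoroot H (α j) (hc j)) {v : V} (hv : IsSingularVector α μ v)
    (hv0 : v ≠ 0) {φ : V →ₗ[ℂ] L} (hφ : IsSingularVector (-α) (-μ) φ) :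
    ∃ h : H, (h : L) = φ v ∧ ∀ j, μ (hc j) = 0 → α j h = 0 := by
  have hφv : φ v ∈ rootSpace H (0 : H → ℂ) := by
    have hmem := apply_mem_weightSpace hφ.lie_eq_smul hv.mem_weightSpace
    rw [neg_add_cancel] at hmem
    exact weightSpace_le_genWeightSpace L _ hmem
  rw [rootSpace_zero_eq] at hφv
  refine ⟨⟨φ v, hφv⟩, rfl, fun j hj => ?_⟩
  obtain ⟨e, he, f, hf, hef⟩ := (hco j).exists_isSl2Triple
  have hprim : hef.HasPrimitiveVectorWith v (μ (hc j)) :=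
    ⟨hv0, hv.lie_eq_smul _, hv.lie_eq_zero _ (hα.isPosRoot j) e he⟩
  have hfv : ⁅f, v⁆ = 0 := by
    simpa only [zero_add, pow_one, toEnd_apply_apply] using
      hprim.pow_toEnd_f_eq_zero_of_eq_nat (n := 0) (by rw [hj, Nat.cast_zero])
  have hfφv := isNegEquivariant_iff_lie_eq_zero.2 hφ.lie_eq_zero _ (hα.isPosRoot j) f hf v
  rw [hfv, map_zero] at hfφv
  have hlie : ⁅φ v, f⁆ = (-α j) ⟨φ v, hφv⟩ • f := mem_rootSpace_iff.1 hf ⟨φ v, hφv⟩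
  rw [← lie_skew, ← hfφv, neg_zero] at hlie
  exact neg_eq_zero.1 ((smul_eq_zero.1 hlie.symm).resolve_right hef.f_ne_zero)

lemma IsHighestWeightGenerator.exists_isSingularVector_apply_eq [FiniteDimensional ℂ V]
    (hα : IsBase H α) {hc : Fin r → H} (hco : ∀ j, IsCoroot H (α j) (hc j)) (hμ : IsDomInt hc μ)
    {v : V} (hv : IsHighestWeightGenerator α μ v) (hv0 : v ≠ 0) {h : H}
    (hh : ∀ j, μ (hc j) = 0 → α j h = 0) :
    ∃ φ : V →ₗ[ℂ] L, IsSingularVector (-α) (-μ) φ ∧ φ v = h := by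
  choose m hm using hμ
  obtain ⟨φ, hφ, hφv⟩ := hv.exists_isNegEquivariant_apply_eq hα hco hm hv0
    (isIntegrableVector_of_finiteDimensional hα v) fun j f hf =>
      toEnd_pow_succ_coe_eq_zero (h := h) hf fun hmj => hh j (by rw [hm, hmj, Nat.cast_zero])
  have hφv0 : φ v ∈ weightSpace L ⇑(0 : Module.Dual ℂ H) :=
    (LieModule.mem_weightSpace _ _).2 fun t => by
      rw [hφv]
      exact mem_rootSpace_iff.1 (mem_rootSpace_zero h) t
  exact ⟨φ, zero_sub μ ▸ hv.isSingularVector_of_isNegEquivariant hα hφ hφv0, hφv⟩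

lemma range_homEval [FiniteDimensional ℂ V] [FiniteDimensional ℂ W] (hα : IsBase H α)
    {hc : Fin r → H} (hco : ∀ j, IsCoroot H (α j) (hc j)) (hμ : IsDomInt hc μ) {v : V}
    (hv : IsHighestWeightGenerator α μ v) (hv0 : v ≠ 0) {w : W}
    (hw : IsHighestWeightGenerator (-α) (-μ) w) (hw0 : w ≠ 0) :
    LinearMap.range (homEval (L := L) (Y := L) w v) =
      (Submodule.span ℂ (α '' {j | μ (hc j) = 0})).dualCoannihilator.map
        (H.incl : H →ₗ[ℂ] L) := by
  ext y
  simp only [LinearMap.mem_range, Submodule.mem_map, mem_dualCoannihilator_span_image]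
  constructor
  · rintro ⟨Θ, rfl⟩
    obtain ⟨h, hh, hαh⟩ := hv.exists_coe_eq_of_isSingularVector hα hco hv0
      (hw.toIsSingularVector.map Θ)
    exact ⟨h, hαh, hh⟩
  · rintro ⟨h, hαh, rfl⟩
    obtain ⟨φ, hφ, hφv⟩ := hv.exists_isSingularVector_apply_eq hα hco hμ hv0 hαh
    obtain ⟨Θ, hΘw⟩ := hw.exists_lieModuleHom_apply_eq hα.neg (fun j => (hco j).neg) hw0
      (isIntegrableVector_of_finiteDimensional hα.neg w) hφ
      (isIntegrableVector_of_finiteDimensional hα.neg φ)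
    exact ⟨Θ, (LinearMap.congr_fun hΘw v).trans hφv⟩

lemma finrank_lieModuleHom_eq_card [FiniteDimensional ℂ V] [FiniteDimensional ℂ W]
    (hα : IsBase H α) {hc : Fin r → H} (hco : ∀ j, IsCoroot H (α j) (hc j)) (hμ : IsDomInt hc μ)
    {v : V} (hv : IsHighestWeightGenerator α μ v) (hv0 : v ≠ 0) {w : W}
    (hw : IsHighestWeightGenerator (-α) (-μ) w) (hw0 : w ≠ 0) :
    finrank ℂ (W →ₗ⁅ℂ,L⁆ V →ₗ[ℂ] L) = (Finset.univ.filter fun j => μ (hc j) ≠ 0).card := by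
  rw [← LinearMap.finrank_range_of_inj (homEval_injective (Y := L) hα hv hw),
    range_homEval hα hco hμ hv hv0 hw hw0, LinearEquiv.finrank_eq
      (Submodule.equivMapOfInjective _ Subtype.val_injective _).symm,
    hα.finrank_dualCoannihilator_span_image]
  rfl

end Evaluation

/-- For a dominant integral weight `μ` of a semisimple Lie algebra `𝔤`,
the `𝔤`-invariant subspace of `adj(𝔤) ⊗ V_μ ⊗ V_μ̄` has dimension equal to the number of
indices `j` with `⟨μ, α_j∨⟩ > 0`. Here `W`, carrying a perfect invariant pairing with
`V_μ`, plays the role of `V_μ̄ ≅ V_μ*`. -/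
theorem adjoint_invariants_in_V_tensor_dual
    {L : Type} [LieRing L] [LieAlgebra ℂ L] [FiniteDimensional ℂ L]
    [LieAlgebra.IsSemisimple ℂ L]
    (H : LieSubalgebra ℂ L) [H.IsCartanSubalgebra]
    {r : ℕ} (α : Fin r → Module.Dual ℂ H) (hc : Fin r → H)
    (hbase : IsBase H α) (hcoroot : ∀ j, IsCoroot H (α j) (hc j))
    (μ : Module.Dual ℂ H) (hμ : IsDomInt hc μ)
    (Vμ W : Type) [AddCommGroup Vμ] [Module ℂ Vμ] [LieRingModule L Vμ] [LieModule ℂ L Vμ]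
    [FiniteDimensional ℂ Vμ]
    [AddCommGroup W] [Module ℂ W] [LieRingModule L W] [LieModule ℂ L W]
    [FiniteDimensional ℂ W]
    (hV : IsHWIrrep H α μ Vμ) (hW : IsDualPair (L := L) W Vμ) :
    Module.finrank ℂ (maxTrivSubmodule ℂ L (L ⊗[ℂ] (Vμ ⊗[ℂ] W))) =
      (Finset.univ.filter fun j => μ (hc j) ≠ 0).card := by
  obtain ⟨_, v, hv0, hvμ, hvsing⟩ := hV
  obtain ⟨B, hBleft, hBright, hB : IsInvariantPairing L B⟩ := hW
  have : B.IsPerfPair := .of_injective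
    ((injective_iff_map_eq_zero B).2 fun w hw => hBleft w (LinearMap.congr_fun hw))
    ((injective_iff_map_eq_zero B.flip).2 fun v hv => hBright v (LinearMap.congr_fun hv))
  have hv : IsHighestWeightGenerator α μ v :=
    IsSingularVector.isHighestWeightGenerator ⟨(mem_weightSpace _ _).2 hvμ, hvsing⟩ hv0
  obtain ⟨w, hw0, hw⟩ := hB.exists_isHighestWeightGenerator_neg hbase hv hv0
  rw [(hB.invariantsEquiv L).finrank_eq]
  exact finrank_lieModuleHom_eq_card hbase hcoroot hμ hv hv0 hw hw0

end AdjPaper
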